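/- arXiv:2103.16266 — 5 statements merged into one kernel-verified Lean document; each statement's English description precedes it below -/
import Mathlib

section
/- Let C be a conjugation on the complex Hilbert space K and let S be a bounded ℂ-linear operator on K with S♭ = S. Then the spectrum σ(S) is conjugate symmetric: for every λ ∈ ℂ, λ ∈ σ(S) if and only if conj(λ) ∈ σ(S). -/
open scoped InnerProductSpace ComplexConjugate

/-- A conjugation on a complex Hilbert space `K`. -/
structure IsConjugation {K : Type*} [NormedAddCommGroup K] [InnerProductSpace ℂ K]
    (C : K → K) : Prop where
  map_add : ∀ x y : K, C (x + y) = C x + C y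
  map_smul : ∀ (a : ℂ) (x : K), C (a • x) = (conj a) • C x
  invol : ∀ x : K, C (C x) = x
  inner_map : ∀ x y : K, ⟪C x, C y⟫_ℂ = conj ⟪x, y⟫_ℂ

/-- Let `C` be a conjugation on the complex Hilbert space `K` and let `S` be
a bounded `ℂ`-linear operator on `K` with `S♭ = S`.  Then the spectrum of `S` is conjugate
symmetric: `λ ∈ σ(S) ↔ conj λ ∈ σ(S)`. -/
theorem spectrum_conjugate_symmetric
    {K : Type*} [NormedAddCommGroup K] [InnerProductSpace ℂ K] [CompleteSpace K]
    {C : K → K} (hC : IsConjugation C) (S : K →L[ℂ] K)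
    (hflat : ∀ ξ : K, C (S (C ξ)) = S ξ) :
    ∀ z : ℂ, z ∈ spectrum ℂ S ↔ (conj z) ∈ spectrum ℂ S := by
  have hbij : Function.Bijective C := Function.Involutive.bijective hC.invol
  have key : ∀ (z : ℂ) (x : K),
      (algebraMap ℂ (K →L[ℂ] K) (conj z) - S) x
        = C ((algebraMap ℂ (K →L[ℂ] K) z - S) (C x)) := by
    intro z x
    have hneg : ∀ y : K, C (-y) = -C y := by
      intro y
      have h := hC.map_smul (-1) y
      simpa using h
    have h1 : (algebraMap ℂ (K →L[ℂ] K) z - S) (C x) = z • C x + -(S (C x)) := by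
      simp [Algebra.algebraMap_eq_smul_one, sub_eq_add_neg]
    rw [h1, hC.map_add, hneg, hflat, hC.map_smul, hC.invol]
    simp [Algebra.algebraMap_eq_smul_one, sub_eq_add_neg]
  have main : ∀ z : ℂ, IsUnit (algebraMap ℂ (K →L[ℂ] K) z - S) →
      IsUnit (algebraMap ℂ (K →L[ℂ] K) (conj z) - S) := by
    intro z h
    rw [ContinuousLinearMap.isUnit_iff_bijective] at h ⊢
    have h2 := hbij.comp (h.comp hbij)
    have h3 : (⇑(algebraMap ℂ (K →L[ℂ] K) (conj z) - S) : K → K)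
        = C ∘ (⇑(algebraMap ℂ (K →L[ℂ] K) z - S) ∘ C) := funext (key z)
    rw [h3]
    exact h2
  intro z
  rw [spectrum.mem_iff, spectrum.mem_iff, not_iff_not]
  refine ⟨main z, fun h => ?_⟩
  have h4 := main _ h
  rwa [Complex.conj_conj] at h4
end

section
/- Let C be a conjugation on the complex Hilbert space K, let S be a bounded normal operator on K with S♭ = S, and let E be the spectral measure of S on 𝔖 = σ(S). For a Borel set A ⊆ 𝔖 the following are equivalent: (i) C∘E(A)∘C = E(A); (ii) E(A^c \ A) = 0; (iii) E(A \ A^c) = 0. -/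
open MeasureTheory
open scoped InnerProductSpace ComplexConjugate ENNReal

/-- A (projection-valued) spectral measure on the Borel subsets of the set `𝔖 ⊆ ℂ`,
together with the family `μ` of its associated diagonal scalar measures
`μ ξ (A) = ⟨E(A)ξ, ξ⟩`. -/
structure IsSpectralMeasure {K : Type*} [NormedAddCommGroup K] [InnerProductSpace ℂ K]
    [CompleteSpace K] (𝔖 : Set ℂ) (E : Set ℂ → K →L[ℂ] K) (μ : K → Measure ℂ) : Prop where
  selfAdjoint : ∀ A : Set ℂ, MeasurableSet A → A ⊆ 𝔖 → IsSelfAdjoint (E A)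
  empty : E ∅ = 0
  univ : E 𝔖 = 1
  inter : ∀ A B : Set ℂ, MeasurableSet A → MeasurableSet B → A ⊆ 𝔖 → B ⊆ 𝔖 →
    E (A ∩ B) = E A ∘L E B
  countablyAdditive : ∀ (ξ η : K) (A : ℕ → Set ℂ), (∀ n, MeasurableSet (A n)) →
    (∀ n, A n ⊆ 𝔖) → Pairwise (Function.onFun Disjoint A) →
    HasSum (fun n => ⟪η, E (A n) ξ⟫_ℂ) ⟪η, E (⋃ n, A n) ξ⟫_ℂ
  measure_eq : ∀ (ξ : K) (A : Set ℂ), MeasurableSet A → A ⊆ 𝔖 →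
    μ ξ A = ENNReal.ofReal (⟪ξ, E A ξ⟫_ℂ).re
  measure_compl : ∀ ξ : K, μ ξ 𝔖ᶜ = 0

/-- The polarized integral `∫_𝔖 f dμ_{ξ,η}` of `f` against the complex measure
`μ_{ξ,η}(A) = ⟨E(A)ξ, η⟩`, expressed through the four diagonal (positive) measures. -/
noncomputable def specInt {K : Type*} [NormedAddCommGroup K] [InnerProductSpace ℂ K]
    (μ : K → Measure ℂ) (f : ℂ → ℂ) (ξ η : K) : ℂ :=
  (4 : ℂ)⁻¹ * (((∫ z, f z ∂(μ (ξ + η))) - ∫ z, f z ∂(μ (ξ - η)))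
    + Complex.I * ((∫ z, f z ∂(μ (ξ + Complex.I • η))) - ∫ z, f z ∂(μ (ξ - Complex.I • η))))

/-- The image `A^c = {conj z : z ∈ A}` of a subset of `ℂ` under complex conjugation. -/
def conjSet (A : Set ℂ) : Set ℂ := (fun z => conj z) '' A


open Filter Topology BoundedContinuousFunction

/-- Auxiliary abstract projection-valued measure. -/
structure PVM {K X : Type*} [NormedAddCommGroup K] [InnerProductSpace ℂ K]
    [CompleteSpace K] [MeasurableSpace X] (P : Set X → K →L[ℂ] K) (m : K → Measure X) : Prop where
  sa : ∀ B, MeasurableSet B → IsSelfAdjoint (P B)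
  univ : P Set.univ = 1
  inter : ∀ A B, MeasurableSet A → MeasurableSet B → P (A ∩ B) = P A ∘L P B
  meas : ∀ ξ B, MeasurableSet B → m ξ B = ENNReal.ofReal (⟪ξ, P B ξ⟫_ℂ).re

/-- `T` represents `f`. -/
def ReprBy {K X : Type*} [NormedAddCommGroup K] [InnerProductSpace ℂ K]
    [MeasurableSpace X] (m : K → Measure X) (f : X → ℂ) (T : K →L[ℂ] K) : Prop :=
  ∀ ξ, ⟪ξ, T ξ⟫_ℂ = ∫ x, f x ∂(m ξ)

theorem clm_ext_diag {K : Type*} [NormedAddCommGroup K] [InnerProductSpace ℂ K]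
    {S T : K →L[ℂ] K} (h : ∀ x, ⟪x, S x⟫_ℂ = ⟪x, T x⟫_ℂ) : S = T := by
  have h2 := (ext_inner_map (S : K →ₗ[ℂ] K) (T : K →ₗ[ℂ] K)).1 (fun x => by
    have := congrArg conj (h x)
    simpa using this)
  ext x
  exact congrArg (fun f : K →ₗ[ℂ] K => f x) h2

namespace PVM

variable {K X : Type*} [NormedAddCommGroup K] [InnerProductSpace ℂ K]
    [CompleteSpace K] [MeasurableSpace X] {P : Set X → K →L[ℂ] K} {m : K → Measure X}

theorem sym (h : PVM P m) {B : Set X} (hB : MeasurableSet B) (ξ η : K) :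
    ⟪P B ξ, η⟫_ℂ = ⟪ξ, P B η⟫_ℂ :=
  (ContinuousLinearMap.isSelfAdjoint_iff_isSymmetric.1 (h.sa B hB)) ξ η

theorem idem (h : PVM P m) {B : Set X} (hB : MeasurableSet B) (ξ : K) :
    P B (P B ξ) = P B ξ := by
  have := h.inter B B hB hB
  rw [Set.inter_self] at this
  exact (congrArg (fun T : K →L[ℂ] K => T ξ) this).symm

theorem inner_eq (h : PVM P m) {B : Set X} (hB : MeasurableSet B) (ξ : K) :
    ⟪ξ, P B ξ⟫_ℂ = ((‖P B ξ‖ ^ 2 : ℝ) : ℂ) := by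
  rw [← h.idem hB, ← h.sym hB, inner_self_eq_norm_sq_to_K, h.idem hB]
  simp

theorem finite (h : PVM P m) (ξ : K) : IsFiniteMeasure (m ξ) :=
  ⟨by rw [h.meas ξ _ MeasurableSet.univ]; exact ENNReal.ofReal_lt_top⟩

theorem real_eq (h : PVM P m) {B : Set X} (hB : MeasurableSet B) (ξ : K) :
    (((m ξ).real B : ℝ) : ℂ) = ⟪ξ, P B ξ⟫_ℂ := by
  rw [Measure.real, h.meas ξ B hB, h.inner_eq hB, Complex.ofReal_re,
    ENNReal.toReal_ofReal (by positivity)]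

theorem add (h : PVM P m) {A B : Set X} (hA : MeasurableSet A) (hB : MeasurableSet B)
    (hd : Disjoint A B) : P (A ∪ B) = P A + P B := by
  apply clm_ext_diag
  intro ξ
  have := h.finite ξ
  rw [_root_.add_apply, inner_add_right, ← h.real_eq (hA.union hB), ← h.real_eq hA,
    ← h.real_eq hB, measureReal_union hd hB]
  simp

theorem empty (h : PVM P m) : P ∅ = 0 := by
  have := h.add (A := ∅) (B := ∅) MeasurableSet.empty MeasurableSet.empty (by simp)
  simpa using this

theorem restr (h : PVM P m) {B : Set X} (hB : MeasurableSet B) (ξ : K) :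
    m (P B ξ) = (m ξ).restrict B := by
  ext A hA
  rw [Measure.restrict_apply hA, h.meas _ _ hA, h.meas _ _ (hA.inter hB), h.sym hB,
    Set.inter_comm, ← Set.inter_self B, Set.inter_assoc, Set.inter_comm B A,
    h.inter _ _ hB (hA.inter hB), h.inter _ _ hA hB, Set.inter_self]
  rfl

theorem comm (h : PVM P m) {f : X → ℂ} {T : K →L[ℂ] K} (hf : ∀ ξ, Integrable f (m ξ))
    (hR : ReprBy m f T) {B : Set X} (hB : MeasurableSet B) :
    ReprBy m (B.indicator f) (T ∘L P B) := by
  have key : T = P B ∘L T ∘L P B + P Bᶜ ∘L T ∘L P Bᶜ := by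
    apply clm_ext_diag
    intro ξ
    simp only [_root_.add_apply, ContinuousLinearMap.comp_apply, inner_add_right]
    rw [← h.sym hB, ← h.sym hB.compl, hR, hR, hR, h.restr hB, h.restr hB.compl,
      integral_add_compl hB (hf ξ)]
  have hz : ∀ ξ, P Bᶜ (P B ξ) = 0 := by
    intro ξ
    have := h.inter Bᶜ B hB.compl hB
    rw [Set.compl_inter_self, h.empty] at this
    exact (congrArg (fun T : K →L[ℂ] K => T ξ) this).symm
  intro ξ
  have k2 : T (P B ξ) = P B (T (P B ξ)) := by
    conv_lhs => rw [key]
    simp [hz, h.idem hB]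
  rw [ContinuousLinearMap.comp_apply, k2, ← h.sym hB, hR, h.restr hB, integral_indicator hB]

theorem rep_one (h : PVM P m) : ReprBy m (fun _ => 1) (1 : K →L[ℂ] K) := by
  intro ξ
  have := h.real_eq MeasurableSet.univ ξ
  rw [h.univ] at this
  rw [integral_const, Complex.real_smul, this, mul_one]

theorem rep_smul {f : X → ℂ} {T : K →L[ℂ] K} (hR : ReprBy m f T) (c : ℂ) :
    ReprBy m (fun x => c * f x) (c • T) := by
  intro ξ
  simp [hR ξ, integral_const_mul]

theorem rep_add {f g : X → ℂ} {T U : K →L[ℂ] K} (hf : ∀ ξ, Integrable f (m ξ))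
    (hg : ∀ ξ, Integrable g (m ξ)) (hR : ReprBy m f T) (hR' : ReprBy m g U) :
    ReprBy m (fun x => f x + g x) (T + U) := by
  intro ξ
  rw [integral_add (hf ξ) (hg ξ), _root_.add_apply, inner_add_right, hR, hR']

theorem rep_star {f : X → ℂ} {T : K →L[ℂ] K} (hR : ReprBy m f T) :
    ReprBy m (fun x => conj (f x)) (ContinuousLinearMap.adjoint T) := by
  intro ξ
  rw [ContinuousLinearMap.adjoint_inner_right, integral_conj, ← hR, inner_conj_symm]

theorem rep_simple (h : PVM P m) {f : X → ℂ} {T : K →L[ℂ] K} (hf : ∀ ξ, Integrable f (m ξ))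
    (hR : ReprBy m f T) (g : SimpleFunc X ℂ) :
    ∃ U, ReprBy m g U ∧ ReprBy m (fun x => f x * g x) (T ∘L U) := by
  have hfin := h.finite
  induction g using SimpleFunc.induction with
  | const c hs =>
    rename_i s
    refine ⟨c • P s, ?_, ?_⟩
    · have := rep_smul (h.comm (fun ξ => integrable_const 1) h.rep_one hs) c
      convert this using 1
      · ext x
        by_cases hx : x ∈ s <;> simp [hx]
      · ext; simp
    · have := rep_smul (h.comm hf hR hs) c
      convert this using 1
      · ext x
        by_cases hx : x ∈ s <;> simp [hx, mul_comm]
      · ext; simp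
  | add hd h1 h2 =>
    rename_i g1 g2
    obtain ⟨U1, a1, b1⟩ := h1
    obtain ⟨U2, a2, b2⟩ := h2
    have i : ∀ (g : SimpleFunc X ℂ) ξ, Integrable (g : X → ℂ) (m ξ) :=
      fun g ξ => SimpleFunc.integrable_of_isFiniteMeasure g
    have j : ∀ (g : SimpleFunc X ℂ) ξ, Integrable (fun x => f x * g x) (m ξ) := by
      intro g ξ
      obtain ⟨M, hM⟩ := g.exists_forall_norm_le
      exact (hf ξ).mul_bdd g.measurable.aestronglyMeasurable (ae_of_all _ hM)
    refine ⟨U1 + U2, rep_add (i g1) (i g2) a1 a2, ?_⟩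
    have := rep_add (j g1) (j g2) b1 b2
    convert this using 1
    · ext x; simp [mul_add]
    · ext; simp

theorem rep_mul (h : PVM P m) {f g : X → ℂ} {T U : K →L[ℂ] K} (hf : ∀ ξ, Integrable f (m ξ))
    (hR : ReprBy m f T) (hgm : Measurable g) {M : ℝ} (hM : ∀ x, ‖g x‖ ≤ M) (hR' : ReprBy m g U) :
    ReprBy m (fun x => f x * g x) (T ∘L U) := by
  have hfin := h.finite
  choose V hV hTV using fun n => h.rep_simple hf hR
    (SimpleFunc.approxOn g hgm Set.univ 0 (Set.mem_univ _) n)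
  have hb : ∀ n x, ‖SimpleFunc.approxOn g hgm Set.univ 0 (Set.mem_univ _) n x‖ ≤ M + M :=
    fun n x => (SimpleFunc.norm_approxOn_zero_le hgm (Set.mem_univ _) x n).trans
      (add_le_add (hM x) (hM x))
  have ht : ∀ x, Tendsto (fun n => SimpleFunc.approxOn g hgm Set.univ 0 (Set.mem_univ _) n x)
      atTop (𝓝 (g x)) :=
    fun x => SimpleFunc.tendsto_approxOn hgm (Set.mem_univ _) (by simp)
  have w1 : ∀ ξ, Tendsto (fun n => ⟪V n ξ, ξ⟫_ℂ) atTop (𝓝 ⟪U ξ, ξ⟫_ℂ) := by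
    intro ξ
    have : Tendsto (fun n => ⟪ξ, V n ξ⟫_ℂ) atTop (𝓝 ⟪ξ, U ξ⟫_ℂ) := by
      simp only [hV _ ξ, hR' ξ]
      exact tendsto_integral_of_dominated_convergence (fun _ => M + M)
        (fun n => (SimpleFunc.measurable _).aestronglyMeasurable) (integrable_const _)
        (fun n => ae_of_all _ (hb n)) (ae_of_all _ ht)
    have := (Complex.continuous_conj.tendsto _).comp this
    simpa [Function.comp_def] using this
  have w2 : ∀ ξ η, Tendsto (fun n => ⟪V n ξ, η⟫_ℂ) atTop (𝓝 ⟪U ξ, η⟫_ℂ) := by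
    intro ξ η
    have e : ∀ W : K →L[ℂ] K, ⟪W ξ, η⟫_ℂ = _ := fun W =>
      inner_map_polarization' (W : K →ₗ[ℂ] K) ξ η
    simp only [e]
    simp only [ContinuousLinearMap.coe_coe]
    exact (((((w1 _).sub (w1 _)).sub ((w1 _).const_mul _)).add ((w1 _).const_mul _)).div_const _)
  intro ξ
  have l1 : Tendsto (fun n => ⟪ξ, T (V n ξ)⟫_ℂ) atTop (𝓝 ⟪ξ, T (U ξ)⟫_ℂ) := by
    have := (Complex.continuous_conj.tendsto _).comp (w2 ξ (ContinuousLinearMap.adjoint T ξ))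
    simpa [Function.comp_def, ContinuousLinearMap.adjoint_inner_left] using this
  have l2 : Tendsto (fun n => ⟪ξ, T (V n ξ)⟫_ℂ) atTop (𝓝 (∫ x, f x * g x ∂(m ξ))) := by
    have e : ∀ n, ⟪ξ, T (V n ξ)⟫_ℂ = _ := fun n => hTV n ξ
    simp only [e]
    refine tendsto_integral_of_dominated_convergence (fun x => ‖f x‖ * (M + M))
      (fun n => (hf ξ).aestronglyMeasurable.mul (SimpleFunc.measurable _).aestronglyMeasurable)
      ((hf ξ).norm.mul_const _)
      (fun n => ae_of_all _ fun x => ?_) (ae_of_all _ fun x => (ht x).const_mul _)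
    rw [norm_mul]
    exact mul_le_mul_of_nonneg_left (hb n x) (norm_nonneg _)
  exact tendsto_nhds_unique l1 l2

end PVM

namespace IsConjugation

variable {K : Type*} [NormedAddCommGroup K] [InnerProductSpace ℂ K] {C : K → K}

theorem inner_left (hC : IsConjugation C) (x y : K) : ⟪C x, y⟫_ℂ = conj ⟪x, C y⟫_ℂ := by
  rw [← hC.inner_map, hC.invol]

theorem inner_right (hC : IsConjugation C) (x y : K) : ⟪x, C y⟫_ℂ = conj ⟪C x, y⟫_ℂ := by
  rw [← hC.inner_map, hC.invol]

theorem map_zero (hC : IsConjugation C) : C 0 = 0 := by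
  have := hC.map_smul 0 0
  simpa using this

theorem adj [CompleteSpace K] (hC : IsConjugation C) {T T' : K →L[ℂ] K}
    (h : ∀ ξ, C (T (C ξ)) = T' ξ) (ξ : K) :
    C (ContinuousLinearMap.adjoint T (C ξ)) = ContinuousLinearMap.adjoint T' ξ := by
  apply ext_inner_left ℂ
  intro v
  rw [hC.inner_right, ContinuousLinearMap.adjoint_inner_right,
    ContinuousLinearMap.adjoint_inner_right, ← h, hC.inner_left]

/-- The linear map `C T C`. -/
def flat (hC : IsConjugation C) (T : K →L[ℂ] K) : K →ₗ[ℂ] K where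
  toFun ξ := C (T (C ξ))
  map_add' x y := by rw [hC.map_add, _root_.map_add, hC.map_add]
  map_smul' c x := by simp [hC.map_smul]

end IsConjugation

theorem PVM.conj_measure {K X : Type*} [NormedAddCommGroup K] [InnerProductSpace ℂ K]
    [CompleteSpace K] [MeasurableSpace X] [PseudoEMetricSpace X] [BorelSpace X] [CompleteSpace X]
    [SecondCountableTopology X]
    {P : Set X → K →L[ℂ] K} {m : K → Measure X} (h : PVM P m)
    {C : K → K} (hC : IsConjugation C) {S : K →L[ℂ] K} (hflat : ∀ ξ : K, C (S (C ξ)) = S ξ)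
    (g : X →ᵇ ℂ) (hg : Function.Injective g) (hS : ReprBy m g S)
    {σ : X → X} (hσ : Continuous σ) (hgσ : ∀ x, g (σ x) = conj (g x)) (ξ : K) :
    m ξ = (m (C ξ)).map σ := by
  have hfin := h.finite
  have i1 : ∀ (f : X →ᵇ ℂ) ξ, Integrable f (m ξ) := fun f ξ => f.integrable _
  have c2 : ∀ (f : X →ᵇ ℂ), Continuous (fun x => conj (f (σ x))) := fun f =>
    Complex.continuous_conj.comp (f.continuous.comp hσ)
  have b2 : ∀ (f : X →ᵇ ℂ) x, ‖conj (f (σ x))‖ ≤ ‖f‖ := fun f x => by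
    rw [RCLike.norm_conj]; exact f.norm_coe_le_norm _
  have i2 : ∀ (f : X →ᵇ ℂ) ξ, Integrable (fun x => conj (f (σ x))) (m ξ) := fun f ξ =>
    Integrable.of_bound (c2 f).measurable.aestronglyMeasurable ‖f‖ (ae_of_all _ (b2 f))
  let A : StarSubalgebra ℂ (X →ᵇ ℂ) :=
    { carrier := {f | ∃ T T' : K →L[ℂ] K, ReprBy m f T ∧
        ReprBy m (fun x => conj (f (σ x))) T' ∧ ∀ ξ, C (T (C ξ)) = T' ξ}
      mul_mem' := by
        rintro f1 f2 ⟨T1, T1', a1, b1, c1⟩ ⟨T2, T2', a2, b2', c2'⟩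
        refine ⟨T1 ∘L T2, T1' ∘L T2', ?_, ?_, ?_⟩
        · exact h.rep_mul (i1 f1) a1 f2.continuous.measurable f2.norm_coe_le_norm a2
        · have := h.rep_mul (i2 f1) b1 (c2 f2).measurable (b2 f2) b2'
          simpa using this
        · intro ξ
          simp [← c1, ← c2', hC.invol]
      add_mem' := by
        rintro f1 f2 ⟨T1, T1', a1, b1, c1⟩ ⟨T2, T2', a2, b2', c2'⟩
        refine ⟨T1 + T2, T1' + T2', ?_, ?_, ?_⟩
        · exact PVM.rep_add (i1 f1) (i1 f2) a1 a2
        · have := PVM.rep_add (i2 f1) (i2 f2) b1 b2'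
          simpa using this
        · intro ξ
          simp [← c1, ← c2', hC.map_add]
      algebraMap_mem' := by
        intro c
        refine ⟨c • 1, conj c • 1, ?_, ?_, ?_⟩
        · have := PVM.rep_smul h.rep_one c
          simp only [mul_one] at this
          exact this
        · have := PVM.rep_smul h.rep_one (conj c)
          simpa using this
        · intro ξ
          simp [hC.map_smul, hC.invol]
      star_mem' := by
        rintro f ⟨T, T', a, b, c⟩
        refine ⟨ContinuousLinearMap.adjoint T, ContinuousLinearMap.adjoint T', ?_, ?_, hC.adj c⟩
        · exact PVM.rep_star a
        · exact PVM.rep_star b }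
  have : IsFiniteMeasure ((m (C ξ)).map σ) := Measure.isFiniteMeasure_map _ _
  refine ext_of_forall_mem_subalgebra_integral_eq_of_pseudoEMetric_complete_countable
    (𝕜 := ℂ) (A := A) ?_ ?_
  · intro x y hxy
    refine ⟨g, ⟨toContinuousMapStarₐ ℂ g, ⟨g, ?_, rfl⟩, rfl⟩, fun e => hxy (hg e)⟩
    refine ⟨S, S, hS, ?_, hflat⟩
    simpa [hgσ] using hS
  · rintro f ⟨T, T', a, b, c⟩
    rw [integral_map hσ.measurable.aemeasurable f.continuous.measurable.aestronglyMeasurable,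
      ← a ξ]
    have e := b (C ξ)
    rw [integral_conj, ← c, hC.invol, hC.inner_map] at e
    exact star_injective e

theorem PVM.conj_proj {K X : Type*} [NormedAddCommGroup K] [InnerProductSpace ℂ K]
    [CompleteSpace K] [MeasurableSpace X]
    {P : Set X → K →L[ℂ] K} {m : K → Measure X} (h : PVM P m)
    {C : K → K} (hC : IsConjugation C) {σ : X → X} (hσ : Measurable σ)
    (hm : ∀ ξ, m ξ = (m (C ξ)).map σ) {B : Set X} (hB : MeasurableSet B) (ξ : K) :
    C (P (σ ⁻¹' B) (C ξ)) = P B ξ := by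
  have : hC.flat (P (σ ⁻¹' B)) = (P B : K →ₗ[ℂ] K) := by
    refine (ext_inner_map _ _).1 fun ξ => ?_
    have e1 : hC.flat (P (σ ⁻¹' B)) ξ = C (P (σ ⁻¹' B) (C ξ)) := rfl
    rw [e1, hC.inner_left, ContinuousLinearMap.coe_coe, h.sym hB, ← h.real_eq hB,
      h.sym (hσ hB), ← h.real_eq (hσ hB), hm ξ, Complex.conj_ofReal,
      map_measureReal_apply hσ hB]
  exact congrArg (fun f : K →ₗ[ℂ] K => f ξ) this

theorem spec_conj {K : Type*} [NormedAddCommGroup K] [InnerProductSpace ℂ K] [CompleteSpace K]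
    {C : K → K} (hC : IsConjugation C) {S : K →L[ℂ] K}
    (hflat : ∀ ξ : K, C (S (C ξ)) = S ξ) {z : ℂ} (hz : z ∈ spectrum ℂ S) :
    conj z ∈ spectrum ℂ S := by
  rw [spectrum.mem_iff] at hz ⊢
  refine fun hu => hz ?_
  rw [ContinuousLinearMap.isUnit_iff_bijective] at hu ⊢
  have hCb : Function.Bijective C := Function.Involutive.bijective hC.invol
  have e : (⇑(algebraMap ℂ (K →L[ℂ] K) z - S) : K → K)
      = C ∘ ⇑(algebraMap ℂ (K →L[ℂ] K) (conj z) - S) ∘ C := by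
    ext ξ
    have hneg : ∀ x y, C (x - y) = C x - C y := by
      intro x y
      have := hC.map_add x ((-1 : ℂ) • y)
      rw [hC.map_smul] at this
      simpa [← sub_eq_add_neg] using this
    simp [hneg, hflat, Algebra.algebraMap_eq_smul_one, hC.map_smul, hC.invol]
  rw [e]
  exact hCb.comp (hu.comp hCb)

theorem spec_pvm {K : Type*} [NormedAddCommGroup K] [InnerProductSpace ℂ K] [CompleteSpace K]
    {𝔖 : Set ℂ} (h𝔖 : MeasurableSet 𝔖) {E : Set ℂ → K →L[ℂ] K} {μ : K → Measure ℂ}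
    (hE : IsSpectralMeasure 𝔖 E μ) :
    PVM (X := 𝔖) (fun B => E (Subtype.val '' B)) (fun ξ => (μ ξ).comap Subtype.val) where
  sa B hB := hE.selfAdjoint _ (h𝔖.subtype_image hB) (by simp)
  univ := by simpa using hE.univ
  inter A B hA hB := by
    rw [Set.image_inter Subtype.val_injective]
    exact hE.inter _ _ (h𝔖.subtype_image hA) (h𝔖.subtype_image hB) (by simp) (by simp)
  meas ξ B hB := by
    rw [comap_subtype_coe_apply h𝔖]
    exact hE.measure_eq _ _ (h𝔖.subtype_image hB) (by simp)

theorem PVM.smul {K X : Type*} [NormedAddCommGroup K] [InnerProductSpace ℂ K]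
    [CompleteSpace K] [MeasurableSpace X]
    {P : Set X → K →L[ℂ] K} {m : K → Measure X} (h : PVM P m) (c : ℂ) (ξ : K) :
    m (c • ξ) = ENNReal.ofReal (‖c‖ ^ 2) • m ξ := by
  ext B hB
  rw [Measure.smul_apply, h.meas _ _ hB, h.meas _ _ hB, h.inner_eq hB, h.inner_eq hB, smul_eq_mul,
    ← ENNReal.ofReal_mul (by positivity)]
  simp only [Complex.ofReal_re, _root_.map_smul, norm_smul, mul_pow]

theorem PVM.smul_int {K X : Type*} [NormedAddCommGroup K] [InnerProductSpace ℂ K]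
    [CompleteSpace K] [MeasurableSpace X]
    {P : Set X → K →L[ℂ] K} {m : K → Measure X} (h : PVM P m) (c : ℂ) (ξ : K) (f : X → ℂ) :
    ∫ x, f x ∂(m (c • ξ)) = (‖c‖ ^ 2 : ℝ) • ∫ x, f x ∂(m ξ) := by
  rw [h.smul, integral_smul_measure, ENNReal.toReal_ofReal (by positivity)]

theorem spec_rep {K : Type*} [NormedAddCommGroup K] [InnerProductSpace ℂ K] [CompleteSpace K]
    {𝔖 : Set ℂ} (h𝔖 : MeasurableSet 𝔖) {E : Set ℂ → K →L[ℂ] K} {μ : K → Measure ℂ}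
    (hE : IsSpectralMeasure 𝔖 E μ) {S : K →L[ℂ] K}
    (hSE : ∀ ξ η : K, ⟪η, S ξ⟫_ℂ = specInt μ (fun z => z) ξ η) :
    ReprBy (X := 𝔖) (fun ξ => (μ ξ).comap Subtype.val) (fun z => (z : ℂ)) S := by
  intro ξ
  have hp := spec_pvm h𝔖 hE
  have e : ∀ ζ, ∫ z, z ∂(μ ζ) = ∫ z : 𝔖, (z : ℂ) ∂((μ ζ).comap Subtype.val) := by
    intro ζ
    rw [integral_subtype_comap h𝔖 (fun z => z), Measure.restrict_eq_self_of_ae_mem]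
    exact hE.measure_compl ζ
  have s := fun c => hp.smul_int c ξ (fun z => (z : ℂ))
  have h1 : ξ + ξ = (2 : ℂ) • ξ := (two_smul ℂ ξ).symm
  have h2 : ξ - ξ = (0 : ℂ) • ξ := by simp
  have h3 : ξ + Complex.I • ξ = (1 + Complex.I) • ξ := by rw [add_smul, one_smul]
  have h4 : ξ - Complex.I • ξ = (1 - Complex.I) • ξ := by rw [sub_smul, one_smul]
  have n : ‖1 + Complex.I‖ = ‖1 - Complex.I‖ := by
    rw [← RCLike.norm_conj (1 + Complex.I)]
    simp [sub_eq_add_neg]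
  rw [hSE, specInt, e, e, e, e, h1, h2, h3, h4, s, s, s, s, n]
  simp
  ring

/-- Let `C` be a conjugation on the complex Hilbert space `K`, let `S` be a
bounded normal operator with `S♭ = S`, and let `E` (with diagonal scalar measures `μ`) be the
spectral measure of `S` on `𝔖 = σ(S)`.  For a Borel set `A ⊆ 𝔖` the following are
equivalent: (i) `C∘E(A)∘C = E(A)`; (ii) `E(A^c \ A) = 0`; (iii) `E(A \ A^c) = 0`. -/
theorem conj_invariant_iff_null_difference
    {K : Type*} [NormedAddCommGroup K] [InnerProductSpace ℂ K] [CompleteSpace K]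
    {C : K → K} (hC : IsConjugation C) (S : K →L[ℂ] K)
    (hnormal : (ContinuousLinearMap.adjoint S) ∘L S = S ∘L (ContinuousLinearMap.adjoint S))
    (hflat : ∀ ξ : K, C (S (C ξ)) = S ξ)
    (E : Set ℂ → K →L[ℂ] K) (μ : K → Measure ℂ)
    (hE : IsSpectralMeasure (spectrum ℂ S) E μ)
    (hSE : ∀ ξ η : K, ⟪η, S ξ⟫_ℂ = specInt μ (fun z => z) ξ η)
    (A : Set ℂ) (hA : MeasurableSet A) (hA𝔖 : A ⊆ spectrum ℂ S) :
    ((∀ ξ : K, C (E A (C ξ)) = E A ξ) ↔ E (conjSet A \ A) = 0) ∧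
    (E (conjSet A \ A) = 0 ↔ E (A \ conjSet A) = 0) := by
  have hcl : MeasurableSet (spectrum ℂ S) := (spectrum.isClosed (𝕜 := ℂ) S).measurableSet
  have hp := spec_pvm hcl hE
  let g : spectrum ℂ S →ᵇ ℂ := BoundedContinuousFunction.mkOfCompact ⟨fun z => (z : ℂ),
    continuous_subtype_val⟩
  let σ : spectrum ℂ S → spectrum ℂ S := fun z => ⟨conj (z : ℂ), spec_conj hC hflat z.2⟩
  have hσ : Continuous σ :=
    (Complex.continuous_conj.comp continuous_subtype_val).subtype_mk _
  have hm := hp.conj_measure hC hflat g Subtype.val_injective (spec_rep hcl hE hSE) hσ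
    (fun x => rfl)
  have mem_c : ∀ (B : Set ℂ) z, z ∈ conjSet B ↔ conj z ∈ B := by
    intro B z
    constructor
    · rintro ⟨w, hw, rfl⟩
      simpa using hw
    · intro hz
      exact ⟨conj z, hz, by simp⟩
  have key : ∀ B : Set ℂ, MeasurableSet B → B ⊆ spectrum ℂ S →
      ∀ ξ, C (E (conjSet B) (C ξ)) = E B ξ := by
    intro B hB hBs ξ
    have := hp.conj_proj hC hσ.measurable hm (B := Subtype.val ⁻¹' B)
      (measurable_subtype_coe hB) ξ
    have e1 : (Subtype.val '' (Subtype.val ⁻¹' B : Set (spectrum ℂ S))) = B := by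
      rw [Subtype.image_preimage_coe]
      exact Set.inter_eq_right.2 hBs
    have e2 : (Subtype.val '' (σ ⁻¹' (Subtype.val ⁻¹' B) : Set (spectrum ℂ S))) = conjSet B := by
      ext z
      rw [mem_c]
      constructor
      · rintro ⟨w, hw, rfl⟩
        exact hw
      · intro hz
        exact ⟨⟨z, by simpa using spec_conj hC hflat (hBs hz)⟩, hz, rfl⟩
    simp only [e1, e2] at this
    exact this
  have cmeas : ∀ B : Set ℂ, MeasurableSet B → MeasurableSet (conjSet B) := by
    intro B hB
    have : conjSet B = (fun z : ℂ => conj z) ⁻¹' B := by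
      ext z; exact mem_c B z
    rw [this]
    exact Complex.continuous_conj.measurable hB
  have csub : conjSet A ⊆ spectrum ℂ S := by
    rintro _ ⟨w, hw, rfl⟩
    exact spec_conj hC hflat (hA𝔖 hw)
  have hAc := cmeas A hA
  have hcc : conjSet (conjSet A) = A := by
    ext z; simp [mem_c]
  have hd1 : conjSet (A \ conjSet A) = conjSet A \ A := by
    ext z; simp [mem_c]
  have hadd : ∀ B D : Set ℂ, MeasurableSet B → MeasurableSet D → B ⊆ spectrum ℂ S →
      E B = E (B ∩ D) + E (B \ D) := by
    intro B D hB hD hBs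
    have := hp.add (A := Subtype.val ⁻¹' (B ∩ D)) (B := Subtype.val ⁻¹' (B \ D))
      (measurable_subtype_coe (hB.inter hD)) (measurable_subtype_coe (hB.diff hD))
      (Disjoint.preimage _ (Set.disjoint_sdiff_inter.symm))
    rw [← Set.preimage_union, Set.inter_union_diff] at this
    simp only [Subtype.image_preimage_coe] at this
    rwa [Set.inter_eq_right.2 hBs, Set.inter_eq_right.2 (Set.inter_subset_left.trans hBs),
      Set.inter_eq_right.2 (Set.diff_subset.trans hBs)] at this
  have k1 : ∀ ξ, C (E A (C ξ)) = E (conjSet A) ξ := by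
    have := key (conjSet A) hAc csub
    rwa [hcc] at this
  have k2 := key (A \ conjSet A) (hA.diff hAc) (Set.diff_subset.trans hA𝔖)
  rw [hd1] at k2
  have ii_iii : E (conjSet A \ A) = 0 ↔ E (A \ conjSet A) = 0 := by
    constructor
    · intro h0
      ext ξ
      rw [← k2, h0]
      simp [hC.map_zero]
    · intro h0
      ext ξ
      have := k2 (C ξ)
      rw [h0, hC.invol] at this
      have := congrArg C this
      rw [hC.invol] at this
      simpa [hC.map_zero] using this
  refine ⟨⟨fun h1 => ?_, fun h0 => ?_⟩, ii_iii⟩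
  · have hEq : E (conjSet A) = E A := by
      ext ξ
      rw [← k1, h1]
    have a1 := hE.inter (conjSet A) (conjSet A \ A) hAc (hAc.diff hA) csub
      (Set.diff_subset.trans csub)
    have a2 := hE.inter A (conjSet A \ A) hA (hAc.diff hA) hA𝔖 (Set.diff_subset.trans csub)
    rw [Set.inter_eq_right.2 Set.diff_subset] at a1
    rw [Set.inter_sdiff_self, hE.empty] at a2
    rw [a1, hEq, ← a2]
  · have h0' := ii_iii.1 h0
    have a1 := hadd A (conjSet A) hA hAc hA𝔖
    have a2 := hadd (conjSet A) A hAc hA csub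
    rw [h0', add_zero] at a1
    rw [h0, add_zero, Set.inter_comm] at a2
    intro ξ
    rw [k1, a2, ← a1]
end

section
/- Let C be a conjugation on the complex Hilbert space K, let S be a bounded normal operator on K with S♭ = S, and let E be the spectral measure of S on 𝔖 = σ(S). Then for every bounded Borel E-stem function f : 𝔖 → ℂ one has C∘f(S)∘C = f(S); consequently f(S) maps the real subspace H into H. -/
open MeasureTheory
open scoped InnerProductSpace ComplexConjugate ENNReal

section Helpers

variable {K : Type*} [NormedAddCommGroup K] [InnerProductSpace ℂ K] [CompleteSpace K]

/-- `T` represents `g` on the diagonal. -/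
def QRep (μ : K → Measure ℂ) (g : ℂ → ℂ) (T : K →L[ℂ] K) : Prop :=
  ∀ ξ : K, ⟪ξ, T ξ⟫_ℂ = ∫ z, g z ∂(μ ξ)

lemma polar (T : K →L[ℂ] K) (ξ η : K) :
    ⟪η, T ξ⟫_ℂ = (4 : ℂ)⁻¹ * ((⟪ξ + η, T (ξ + η)⟫_ℂ - ⟪ξ - η, T (ξ - η)⟫_ℂ)
      + Complex.I * (⟪ξ + Complex.I • η, T (ξ + Complex.I • η)⟫_ℂ
        - ⟪ξ - Complex.I • η, T (ξ - Complex.I • η)⟫_ℂ)) := by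
  simp only [map_add, map_sub, map_smul, inner_add_left, inner_add_right, inner_sub_left,
    inner_sub_right, inner_smul_left, inner_smul_right, Complex.conj_I]
  have := Complex.I_mul_I
  ring_nf
  simp only [Complex.I_sq]
  ring

lemma QRep.specInt {μ : K → Measure ℂ} {g : ℂ → ℂ} {T : K →L[ℂ] K} (h : QRep μ g T) (ξ η : K) :
    ⟪η, T ξ⟫_ℂ = specInt μ g ξ η := by
  rw [polar, h, h, h, h, _root_.specInt]

lemma clm_ext_diag_s8 {T U : K →L[ℂ] K} (h : ∀ ξ, ⟪ξ, T ξ⟫_ℂ = ⟪ξ, U ξ⟫_ℂ) : T = U := by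
  ext ξ
  refine ext_inner_left ℂ fun η => ?_
  rw [polar, polar U, h, h, h, h]

variable {𝔖 : Set ℂ} {E : Set ℂ → K →L[ℂ] K} {μ : K → Measure ℂ}

lemma meas_inter (hE : IsSpectralMeasure 𝔖 E μ) (hm : MeasurableSet 𝔖) (ξ : K) (A : Set ℂ) :
    μ ξ (A ∩ 𝔖) = μ ξ A := measure_inter_conull (hE.measure_compl ξ)

lemma proj_inner (hE : IsSpectralMeasure 𝔖 E μ) (hm : MeasurableSet 𝔖)
    {A : Set ℂ} (hA : MeasurableSet A) (ξ η : K) :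
    ⟪E (A ∩ 𝔖) η, ξ⟫_ℂ = ⟪η, E (A ∩ 𝔖) ξ⟫_ℂ := by
  have h := hE.selfAdjoint (A ∩ 𝔖) (hA.inter hm) Set.inter_subset_right
  rw [← ContinuousLinearMap.adjoint_inner_right, ContinuousLinearMap.isSelfAdjoint_iff'.1 h]

lemma proj_mul (hE : IsSpectralMeasure 𝔖 E μ) (hm : MeasurableSet 𝔖)
    {A B : Set ℂ} (hA : MeasurableSet A) (hB : MeasurableSet B) (ξ : K) :
    E (A ∩ 𝔖) (E (B ∩ 𝔖) ξ) = E (A ∩ B ∩ 𝔖) ξ := by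
  have h := hE.inter (A ∩ 𝔖) (B ∩ 𝔖) (hA.inter hm) (hB.inter hm) Set.inter_subset_right
    Set.inter_subset_right
  rw [← Set.inter_inter_distrib_right] at h
  rw [h]; rfl

lemma proj_norm (hE : IsSpectralMeasure 𝔖 E μ) (hm : MeasurableSet 𝔖)
    {A : Set ℂ} (hA : MeasurableSet A) (ξ : K) :
    ⟪ξ, E (A ∩ 𝔖) ξ⟫_ℂ = ((‖E (A ∩ 𝔖) ξ‖ ^ 2 : ℝ) : ℂ) := by
  have h := proj_mul hE hm hA hA ξ
  rw [Set.inter_self] at h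
  rw [← h, ← proj_inner hE hm hA, h, inner_self_eq_norm_sq_to_K]
  simp

lemma meas_eq (hE : IsSpectralMeasure 𝔖 E μ) (hm : MeasurableSet 𝔖)
    {A : Set ℂ} (hA : MeasurableSet A) (ξ : K) :
    μ ξ A = ENNReal.ofReal (‖E (A ∩ 𝔖) ξ‖ ^ 2) := by
  rw [← meas_inter hE hm, hE.measure_eq ξ _ (hA.inter hm) Set.inter_subset_right,
    proj_norm hE hm hA, Complex.ofReal_re]

lemma meas_fin (hE : IsSpectralMeasure 𝔖 E μ) (hm : MeasurableSet 𝔖) (ξ : K) :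
    IsFiniteMeasure (μ ξ) := ⟨by rw [meas_eq hE hm .univ]; exact ENNReal.ofReal_lt_top⟩

lemma qrep_ind (hE : IsSpectralMeasure 𝔖 E μ) (hm : MeasurableSet 𝔖)
    {A : Set ℂ} (hA : MeasurableSet A) (c : ℂ) :
    QRep μ (A.indicator fun _ => c) (c • E (A ∩ 𝔖)) := by
  intro ξ
  have := meas_fin hE hm ξ
  rw [integral_indicator hA, setIntegral_const, ContinuousLinearMap.smul_apply, inner_smul_right,
    proj_norm hE hm hA, Measure.real, meas_eq hE hm hA, ENNReal.toReal_ofReal (by positivity),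
    Complex.real_smul, mul_comm]

lemma qrep_const (hE : IsSpectralMeasure 𝔖 E μ) (hm : MeasurableSet 𝔖) (c : ℂ) :
    QRep μ (fun _ => c) (c • (1 : K →L[ℂ] K)) := by
  have := qrep_ind hE hm .univ c
  rwa [Set.indicator_univ, Set.univ_inter, hE.univ] at this

lemma proj_add (hE : IsSpectralMeasure 𝔖 E μ) (hm : MeasurableSet 𝔖)
    {A : Set ℂ} (hA : MeasurableSet A) : E (A ∩ 𝔖) + E (Aᶜ ∩ 𝔖) = 1 := by
  apply clm_ext_diag_s8
  intro ξ
  have := meas_fin hE hm ξ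
  have h1 := qrep_ind hE hm hA 1 ξ
  have h2 := qrep_ind hE hm hA.compl 1 ξ
  have h3 := qrep_const hE hm 1 ξ
  rw [one_smul] at h1 h2 h3
  rw [ContinuousLinearMap.add_apply, inner_add_right, h1, h2, h3, integral_indicator hA,
    integral_indicator hA.compl, integral_add_compl hA (integrable_const _)]

lemma meas_restrict (hE : IsSpectralMeasure 𝔖 E μ) (hm : MeasurableSet 𝔖)
    {A : Set ℂ} (hA : MeasurableSet A) (ξ : K) :
    μ (E (A ∩ 𝔖) ξ) = (μ ξ).restrict A := by
  ext B hB
  rw [Measure.restrict_apply hB, meas_eq hE hm hB, meas_eq hE hm (hB.inter hA),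
    proj_mul hE hm hB hA]

lemma meas_smul (hE : IsSpectralMeasure 𝔖 E μ) (hm : MeasurableSet 𝔖) (c : ℂ) (ξ : K) :
    μ (c • ξ) = ENNReal.ofReal (‖c‖ ^ 2) • μ ξ := by
  ext B hB
  rw [Measure.smul_apply, meas_eq hE hm hB, meas_eq hE hm hB, smul_eq_mul,
    ← ENNReal.ofReal_mul (by positivity), map_smul, norm_smul, mul_pow]

lemma specInt_self (hE : IsSpectralMeasure 𝔖 E μ) (hm : MeasurableSet 𝔖) (g : ℂ → ℂ) (ξ : K) :
    specInt μ g ξ ξ = ∫ z, g z ∂(μ ξ) := by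
  have h1 : ξ + ξ = (2 : ℂ) • ξ := (two_smul ℂ ξ).symm
  have h2 : ξ - ξ = (0 : ℂ) • ξ := by simp
  have h3 : ξ + Complex.I • ξ = (1 + Complex.I) • ξ := by rw [add_smul, one_smul]
  have h4 : ξ - Complex.I • ξ = (1 - Complex.I) • ξ := by rw [sub_smul, one_smul]
  have h5 : ‖(1 : ℂ) + Complex.I‖ ^ 2 = 2 := by
    rw [← Complex.normSq_eq_norm_sq]; simp [Complex.normSq_apply]; norm_num
  have h6 : ‖(1 : ℂ) - Complex.I‖ ^ 2 = 2 := by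
    rw [← Complex.normSq_eq_norm_sq]; simp [Complex.normSq_apply]; norm_num
  rw [specInt, h1, h2, h3, h4, meas_smul hE hm, meas_smul hE hm, meas_smul hE hm, meas_smul hE hm,
    h5, h6]
  simp only [integral_smul_measure, sub_self, mul_zero, add_zero]
  simp
  norm_num
  rw [← mul_assoc]
  norm_num

lemma qrep_comm (hE : IsSpectralMeasure 𝔖 E μ) (hm : MeasurableSet 𝔖)
    {A : Set ℂ} (hA : MeasurableSet A) {g : ℂ → ℂ} {T : K →L[ℂ] K} (h : QRep μ g T)
    (hg : ∀ ξ, Integrable g (μ ξ)) (ξ : K) :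
    ⟪ξ, T (E (A ∩ 𝔖) ξ)⟫_ℂ = ∫ z in A, g z ∂(μ ξ) := by
  have key : T = E (A ∩ 𝔖) ∘L T ∘L E (A ∩ 𝔖) + E (Aᶜ ∩ 𝔖) ∘L T ∘L E (Aᶜ ∩ 𝔖) := by
    apply clm_ext_diag_s8
    intro ζ
    simp only [ContinuousLinearMap.add_apply, inner_add_right, ContinuousLinearMap.comp_apply]
    rw [← proj_inner hE hm hA, ← proj_inner hE hm hA.compl, h, h, h, meas_restrict hE hm hA,
      meas_restrict hE hm hA.compl, integral_add_compl hA (hg ζ)]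
  have h2 : T (E (A ∩ 𝔖) ξ) = E (A ∩ 𝔖) (T (E (A ∩ 𝔖) ξ)) := by
    conv_lhs => rw [key]
    simp only [ContinuousLinearMap.add_apply, ContinuousLinearMap.comp_apply]
    rw [proj_mul hE hm hA hA, proj_mul hE hm hA.compl hA]
    simp [hE.empty]
  rw [h2, ← proj_inner hE hm hA, h, meas_restrict hE hm hA]

lemma specInt_add_fun (hE : IsSpectralMeasure 𝔖 E μ) (hm : MeasurableSet 𝔖) {g h : ℂ → ℂ}
    (hg : ∀ ξ, Integrable g (μ ξ)) (hh : ∀ ξ, Integrable h (μ ξ)) (ξ η : K) :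
    specInt μ (fun z => g z + h z) ξ η = specInt μ g ξ η + specInt μ h ξ η := by
  simp only [specInt]
  rw [integral_add (hg _) (hh _), integral_add (hg _) (hh _), integral_add (hg _) (hh _),
    integral_add (hg _) (hh _)]
  ring

lemma qrep_mul (hE : IsSpectralMeasure 𝔖 E μ) (hm : MeasurableSet 𝔖) {g h : ℂ → ℂ}
    {T U : K →L[ℂ] K} (hT : QRep μ g T) (hU : QRep μ h U) (hgm : Measurable g)
    (hhm : Measurable h) {c d : ℝ} (hg : ∀ z, ‖g z‖ ≤ c) (hh : ∀ z, ‖h z‖ ≤ d) :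
    QRep μ (fun z => g z * h z) (T ∘L U) := by
  have hfin := meas_fin hE hm
  have hgi : ∀ ξ, Integrable g (μ ξ) := fun ξ =>
    Integrable.of_bound hgm.aestronglyMeasurable c (.of_forall hg)
  intro ξ
  set η := ContinuousLinearMap.adjoint T ξ with hη
  have hT' : ∀ v, ⟪η, v⟫_ℂ = ⟪ξ, T v⟫_ℂ := fun v => by
    rw [hη, ContinuousLinearMap.adjoint_inner_left]
  have hsimp : ∀ k : SimpleFunc ℂ ℂ, specInt μ k ξ η = ∫ z, g z * k z ∂(μ ξ) := by
    intro k
    induction k using SimpleFunc.induction with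
    | const a hs =>
      rename_i s
      have e : ⇑(SimpleFunc.piecewise s hs (SimpleFunc.const ℂ a) (SimpleFunc.const ℂ 0))
          = s.indicator (fun _ => a) := by
        ext z; simp [Set.indicator, Set.piecewise]
      rw [e, ← (qrep_ind hE hm hs a).specInt, hT', ContinuousLinearMap.smul_apply, map_smul,
        inner_smul_right, qrep_comm hE hm hs hT hgi, ← integral_const_mul,
        ← integral_indicator hs]
      congr 1
      ext z
      by_cases hz : z ∈ s <;> simp [hz, mul_comm]
    | add _ h1 h2 =>
      rename_i k1 k2 _
      have i1 : ∀ (k : SimpleFunc ℂ ℂ) ζ, Integrable k (μ ζ) := fun k ζ =>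
        SimpleFunc.integrable_of_isFiniteMeasure k
      have i2 : ∀ (k : SimpleFunc ℂ ℂ), Integrable (fun z => g z * k z) (μ ξ) := fun k =>
        (i1 k ξ).bdd_mul hgm.aestronglyMeasurable (.of_forall hg)
      simp only [SimpleFunc.coe_add, Pi.add_apply, mul_add]
      rw [integral_add (i2 _) (i2 _), ← h1, ← h2]
      exact specInt_add_fun hE hm (i1 k1) (i1 k2) ξ η
  have hd : 0 ≤ d := (norm_nonneg _).trans (hh 0)
  have hc : 0 ≤ c := (norm_nonneg _).trans (hg 0)
  let hs := hhm.stronglyMeasurable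
  let k := hs.approxBounded d
  have lim : ∀ ζ, Filter.Tendsto (fun n => ∫ z, k n z ∂(μ ζ)) Filter.atTop
      (nhds (∫ z, h z ∂(μ ζ))) := fun ζ =>
    tendsto_integral_of_dominated_convergence (fun _ => d)
      (fun n => (k n).measurable.aestronglyMeasurable) (integrable_const _)
      (fun n => .of_forall fun z => hs.norm_approxBounded_le hd n z)
      (.of_forall fun z => hs.tendsto_approxBounded_of_norm_le (hh z))
  have lim2 : Filter.Tendsto (fun n => ∫ z, g z * k n z ∂(μ ξ)) Filter.atTop
      (nhds (∫ z, g z * h z ∂(μ ξ))) :=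
    tendsto_integral_of_dominated_convergence (fun _ => c * d)
      (fun n => (hgm.mul (k n).measurable).aestronglyMeasurable) (integrable_const _)
      (fun n => .of_forall fun z => by
        rw [norm_mul]
        exact mul_le_mul (hg z) (hs.norm_approxBounded_le hd n z) (norm_nonneg _) hc)
      (.of_forall fun z => (hs.tendsto_approxBounded_of_norm_le (hh z)).const_mul _)
  have lim3 : Filter.Tendsto (fun n => specInt μ (k n) ξ η) Filter.atTop
      (nhds (specInt μ h ξ η)) := by
    unfold specInt
    exact ((((lim _).sub (lim _)).add (((lim _).sub (lim _)).const_mul _)).const_mul _)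
  rw [ContinuousLinearMap.comp_apply, ← hT', hU.specInt]
  refine tendsto_nhds_unique lim3 ?_
  simp only [hsimp]
  exact lim2

lemma qrep_star {g : ℂ → ℂ} {T : K →L[ℂ] K} (hT : QRep μ g T) :
    QRep μ (fun z => conj (g z)) (ContinuousLinearMap.adjoint T) := by
  intro ξ
  rw [ContinuousLinearMap.adjoint_inner_right, ← inner_conj_symm, hT, integral_conj]

/-- The truncation of the identity. -/
noncomputable def trunc (R : ℝ) (z : ℂ) : ℂ := ((R / max R ‖z‖ : ℝ) : ℂ) * z

lemma trunc_eq {R : ℝ} (hR : 0 < R) {z : ℂ} (hz : ‖z‖ ≤ R) : trunc R z = z := by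
  rw [trunc, max_eq_left hz, div_self hR.ne']; simp

lemma trunc_bound {R : ℝ} (hR : 0 < R) (z : ℂ) : ‖trunc R z‖ ≤ R := by
  have h : 0 < max R ‖z‖ := lt_max_of_lt_left hR
  rw [trunc, norm_mul, Complex.norm_real, Real.norm_of_nonneg (by positivity), div_mul_eq_mul_div,
    div_le_iff₀ h]
  gcongr
  exact le_max_right _ _

lemma trunc_cont {R : ℝ} (hR : 0 < R) : Continuous (trunc R) := by
  unfold trunc
  refine (Complex.continuous_ofReal.comp ?_).mul continuous_id
  exact continuous_const.div (by fun_prop) fun z => (lt_max_of_lt_left hR).ne'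

open BoundedContinuousFunction

/-- Bounded continuous functions with a represented, conjugation compatible operator. -/
def goodAlg (hE : IsSpectralMeasure 𝔖 E μ) (hm : MeasurableSet 𝔖) {C : K → K}
    (hC : IsConjugation C) : StarSubalgebra ℂ (ℂ →ᵇ ℂ) where
  carrier := {g | ∃ T U : K →L[ℂ] K, QRep μ g T ∧ QRep μ (fun z => g (conj z)) U ∧
    ∀ ξ, C (T (C ξ)) = ContinuousLinearMap.adjoint U ξ}
  mul_mem' := by
    rintro g h ⟨T, U, h1, h2, h3⟩ ⟨T', U', h1', h2', h3'⟩
    refine ⟨T ∘L T', U' ∘L U, ?_, ?_, ?_⟩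
    · exact qrep_mul hE hm h1 h1' g.continuous.measurable h.continuous.measurable
        g.norm_coe_le_norm h.norm_coe_le_norm
    · have := qrep_mul hE hm h2' h2 (h.continuous.comp Complex.continuous_conj).measurable
        (g.continuous.comp Complex.continuous_conj).measurable
        (fun z => h.norm_coe_le_norm _) (fun z => g.norm_coe_le_norm _)
      intro ξ
      rw [this]
      simp [mul_comm]
    · intro ξ
      rw [ContinuousLinearMap.adjoint_comp, ContinuousLinearMap.comp_apply,
        ContinuousLinearMap.comp_apply, ← h3', ← h3, hC.invol]
  add_mem' := by
    rintro g h ⟨T, U, h1, h2, h3⟩ ⟨T', U', h1', h2', h3'⟩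
    have hfin := meas_fin hE hm
    have hi : ∀ (g : ℂ →ᵇ ℂ) ξ, Integrable g (μ ξ) := fun g ξ => g.integrable _
    have hi' : ∀ (g : ℂ →ᵇ ℂ) ξ, Integrable (fun z => g (conj z)) (μ ξ) := fun g ξ =>
      Integrable.of_bound (g.continuous.comp Complex.continuous_conj).aestronglyMeasurable ‖g‖
        (.of_forall fun z => g.norm_coe_le_norm _)
    refine ⟨T + T', U + U', fun ξ => ?_, fun ξ => ?_, fun ξ => ?_⟩
    · simp only [ContinuousLinearMap.add_apply, inner_add_right, h1 ξ, h1' ξ, coe_add,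
        Pi.add_apply]
      rw [integral_add (hi _ _) (hi _ _)]
    · simp only [ContinuousLinearMap.add_apply, inner_add_right, h2 ξ, h2' ξ, coe_add,
        Pi.add_apply]
      rw [integral_add (hi' _ _) (hi' _ _)]
    · simp only [ContinuousLinearMap.add_apply, hC.map_add, map_add, h3, h3']
  algebraMap_mem' := by
    intro r
    refine ⟨r • 1, r • 1, ?_, ?_, ?_⟩
    · exact qrep_const hE hm r
    · exact qrep_const hE hm r
    · intro ξ
      refine ext_inner_left ℂ fun v => ?_
      rw [ContinuousLinearMap.adjoint_inner_right]
      simp [hC.map_smul, hC.invol, inner_smul_left, inner_smul_right]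
  star_mem' := by
    rintro g ⟨T, U, h1, h2, h3⟩
    refine ⟨_, _, qrep_star h1, qrep_star h2, fun ξ => ?_⟩
    refine ext_inner_left ℂ fun v => ?_
    rw [ContinuousLinearMap.adjoint_adjoint]
    rw [← hC.invol v, hC.inner_map, ContinuousLinearMap.adjoint_inner_right, ← hC.inner_map,
      hC.invol ξ, h3, ContinuousLinearMap.adjoint_inner_left, hC.invol]

lemma meas_conj (hE : IsSpectralMeasure 𝔖 E μ) (hm : MeasurableSet 𝔖) {C : K → K}
    (hC : IsConjugation C) (S : K →L[ℂ] K) (hflat : ∀ ξ : K, C (S (C ξ)) = S ξ)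
    {R₀ : ℝ} (hR₀ : ∀ z ∈ 𝔖, ‖z‖ ≤ R₀)
    (hS : QRep μ (fun z => z) S) (ξ : K) :
    μ (C ξ) = (μ ξ).map (fun z => conj z) := by
  have hfin := meas_fin hE hm
  have hcm : Measurable (fun z : ℂ => conj z) := Complex.continuous_conj.measurable
  have hin : ∀ R, ∀ hR : 0 < R, R₀ ≤ R → ∀ hb, BoundedContinuousFunction.ofNormedAddCommGroup
      (trunc R) hb R (trunc_bound hR) ∈ goodAlg hE hm hC := by
    intro R hR hRR hb
    have hae : ∀ ζ, ∀ᵐ z ∂(μ ζ), z ∈ 𝔖 := fun ζ => hE.measure_compl ζ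
    refine ⟨S, ContinuousLinearMap.adjoint S, fun ζ => ?_, fun ζ => ?_, fun ζ => ?_⟩
    · rw [hS]
      refine integral_congr_ae ?_
      filter_upwards [hae ζ] with z hz
      exact (trunc_eq hR ((hR₀ z hz).trans hRR)).symm
    · rw [qrep_star hS]
      refine integral_congr_ae ?_
      filter_upwards [hae ζ] with z hz
      refine (trunc_eq hR ?_).symm
      rw [Complex.norm_conj]
      exact (hR₀ z hz).trans hRR
    · rw [hflat, ContinuousLinearMap.adjoint_adjoint]
  have : IsFiniteMeasure ((μ ξ).map (fun z => conj z)) := inferInstance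
  refine ext_of_forall_mem_subalgebra_integral_eq_of_polish (𝕜 := ℂ) (A := goodAlg hE hm hC) ?_ ?_
  · intro x y hxy
    set R := max (max 1 R₀) (max ‖x‖ ‖y‖) with hRdef
    have hR : 0 < R := lt_max_of_lt_left (lt_max_of_lt_left one_pos)
    have hx : ‖x‖ ≤ R := le_max_of_le_right (le_max_left _ _)
    have hy : ‖y‖ ≤ R := le_max_of_le_right (le_max_right _ _)
    refine ⟨trunc R, ⟨_, ⟨_, hin R hR (le_max_of_le_left (le_max_right _ _)) (trunc_cont hR),
      rfl⟩, rfl⟩, ?_⟩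
    rwa [trunc_eq hR hx, trunc_eq hR hy]
  · rintro g ⟨T, U, h1, h2, h3⟩
    rw [integral_map hcm.aemeasurable g.continuous.aestronglyMeasurable, ← h1, ← h2]
    have h4 := hC.inner_map ξ (C (T (C ξ)))
    rw [hC.invol, h3, ContinuousLinearMap.adjoint_inner_right, inner_conj_symm] at h4
    exact h4

end Helpers

/-- Let `C` be a conjugation on `K`, `S` a bounded normal operator with
`S♭ = S`, and `E` (with diagonal scalar measures `μ`) the spectral measure of `S` on
`𝔖 = σ(S)`.  Then for every bounded Borel `E`-stem function `f` one has
`C ∘ f(S) ∘ C = f(S)`; consequently `f(S)` maps the real subspace `H` into itself. -/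
theorem stem_functionalCalculus_conj_invariant
    {K : Type*} [NormedAddCommGroup K] [InnerProductSpace ℂ K] [CompleteSpace K]
    {C : K → K} (hC : IsConjugation C) (S : K →L[ℂ] K)
    (hnormal : (ContinuousLinearMap.adjoint S) ∘L S = S ∘L (ContinuousLinearMap.adjoint S))
    (hflat : ∀ ξ : K, C (S (C ξ)) = S ξ)
    (E : Set ℂ → K →L[ℂ] K) (μ : K → Measure ℂ)
    (hE : IsSpectralMeasure (spectrum ℂ S) E μ)
    (hSE : ∀ ξ η : K, ⟪η, S ξ⟫_ℂ = specInt μ (fun z => z) ξ η)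
    (f : ℂ → ℂ) (hfmeas : Measurable f)
    (hfbdd : ∃ M : ℝ, ∀ z ∈ spectrum ℂ S, ‖f z‖ ≤ M)
    (hfstem : ∃ N : Set ℂ, MeasurableSet N ∧ N ⊆ spectrum ℂ S ∧ E N = 0 ∧
      ∀ z ∈ spectrum ℂ S \ N, f (conj z) = conj (f z))
    (Φf : K →L[ℂ] K) (hΦf : ∀ ξ η : K, ⟪η, Φf ξ⟫_ℂ = specInt μ f ξ η) :
    (∀ ξ : K, C (Φf (C ξ)) = Φf ξ) ∧ (∀ u : K, C u = u → C (Φf u) = Φf u) := by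
  have hm : MeasurableSet (spectrum ℂ S) := (spectrum.isCompact S).measurableSet
  obtain ⟨R₀, hR₀⟩ := (spectrum.isCompact (𝕜 := ℂ) S).isBounded.exists_norm_le
  have hS : QRep μ (fun z => z) S := fun ξ => by rw [hSE, specInt_self hE hm]
  have hmu := meas_conj hE hm hC S hflat hR₀ hS
  obtain ⟨N, hNm, hNs, hN0, hN⟩ := hfstem
  have hint : ∀ ζ, ∫ z, f z ∂(μ (C ζ)) = conj (∫ z, f z ∂(μ ζ)) := by
    intro ζ
    have hcm : Measurable (fun z : ℂ => conj z) := Complex.continuous_conj.measurable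
    rw [hmu, integral_map hcm.aemeasurable hfmeas.aestronglyMeasurable, ← integral_conj]
    refine integral_congr_ae ?_
    have h1 : ∀ᵐ z ∂(μ ζ), z ∈ spectrum ℂ S := hE.measure_compl ζ
    have h2 : ∀ᵐ z ∂(μ ζ), z ∉ N := by
      rw [← measure_eq_zero_iff_ae_notMem, hE.measure_eq ζ N hNm hNs, hN0]
      simp
    filter_upwards [h1, h2] with z hz hz'
    exact hN z ⟨hz, hz'⟩
  have hneg : ∀ x, C (-x) = - C x := fun x => by
    have := hC.map_smul (-1) x
    simpa using this
  have hsub : ∀ x y, C (x - y) = C x - C y := fun x y => by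
    rw [sub_eq_add_neg, hC.map_add, hneg, sub_eq_add_neg]
  have main : ∀ ξ : K, C (Φf (C ξ)) = Φf ξ := by
    intro ξ
    refine ext_inner_left ℂ fun η => ?_
    have h0 : ⟪η, C (Φf (C ξ))⟫_ℂ = conj ⟪C η, Φf (C ξ)⟫_ℂ := by
      rw [← hC.inner_map, hC.invol]
    have e1 : C ξ + C η = C (ξ + η) := (hC.map_add _ _).symm
    have e2 : C ξ - C η = C (ξ - η) := (hsub _ _).symm
    have e3 : C ξ + Complex.I • C η = C (ξ - Complex.I • η) := by
      rw [hsub, hC.map_smul]; simp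
    have e4 : C ξ - Complex.I • C η = C (ξ + Complex.I • η) := by
      rw [hC.map_add, hC.map_smul]; simp [sub_eq_add_neg]
    rw [h0, hΦf, hΦf, specInt, specInt, e1, e2, e3, e4, hint, hint, hint, hint]
    simp only [map_mul, map_add, map_sub, Complex.conj_conj, Complex.conj_I, map_inv₀,
      map_ofNat]
    ring
  refine ⟨main, fun u hu => ?_⟩
  have := main u
  rwa [hu] at this
end

section
/- Let C be a conjugation on the complex Hilbert space K, let S be a bounded normal operator on K with S♭ = S, and let E be the spectral measure of S on 𝔖 = σ(S). For each bounded Borel E-stem function f set Φ(f) := f(S)|H, a bounded ℝ-linear operator on the real Hilbert space H. Then: Φ is ℝ-linear, multiplicative (Φ(fg) = Φ(f)Φ(g)) and unital; Φ(conj f) = Φ(f)* (adjoint taken on the real Hilbert space H) and each Φ(f) is a normal operator on H; for every polynomial p(z) = Σ_{j=1}^n a_j z^j with real coefficients a_j one has Φ(p) = Σ_{j=1}^n a_j T^j where T := S|H; and ‖Φ(f)x‖² = ∫_𝔖 |f|² dμ_{x,x} for every x ∈ H, where μ_{x,y}(A) = ⟨E(A)x, y⟩. -/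
open MeasureTheory
open scoped InnerProductSpace ComplexConjugate ENNReal

/-- A bounded Borel function on `𝔖`. -/
def BddBorelOn (𝔖 : Set ℂ) (f : ℂ → ℂ) : Prop :=
  Measurable f ∧ ∃ M : ℝ, ∀ z ∈ 𝔖, ‖f z‖ ≤ M

/-- An `E`-stem function on `𝔖`: `f(conj z) = conj (f z)` off an `E`-null Borel set. -/
def IsStemFun {K : Type*} [NormedAddCommGroup K] [InnerProductSpace ℂ K] [CompleteSpace K]
    (𝔖 : Set ℂ) (E : Set ℂ → K →L[ℂ] K) (f : ℂ → ℂ) : Prop :=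
  ∃ N : Set ℂ, MeasurableSet N ∧ N ⊆ 𝔖 ∧ E N = 0 ∧
    ∀ z ∈ 𝔖 \ N, f (conj z) = conj (f z)

namespace StemCalc

variable {K : Type*} [NormedAddCommGroup K] [InnerProductSpace ℂ K] [CompleteSpace K]
  {𝔖 : Set ℂ} {E : Set ℂ → K →L[ℂ] K} {μ : K → Measure ℂ}

lemma measure_apply (hE : IsSpectralMeasure 𝔖 E μ) (hm : MeasurableSet 𝔖) (ξ : K) {A : Set ℂ}
    (hA : MeasurableSet A) : μ ξ A = ENNReal.ofReal (⟪ξ, E (A ∩ 𝔖) ξ⟫_ℂ).re := by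
  rw [← hE.measure_eq ξ _ (hA.inter hm) Set.inter_subset_right]
  refine le_antisymm ?_ (measure_mono Set.inter_subset_left)
  calc μ ξ A ≤ μ ξ ((A ∩ 𝔖) ∪ 𝔖ᶜ) := by
        apply measure_mono
        intro x hx
        by_cases h : x ∈ 𝔖
        · exact Or.inl ⟨hx, h⟩
        · exact Or.inr h
    _ ≤ _ := (measure_union_le _ _).trans (by rw [hE.measure_compl, add_zero])

lemma proj_inner (hE : IsSpectralMeasure 𝔖 E μ) {A : Set ℂ} (hA : MeasurableSet A) (h : A ⊆ 𝔖)
    (ξ : K) : ⟪ξ, E A ξ⟫_ℂ = ((‖E A ξ‖ ^ 2 : ℝ) : ℂ) := by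
  have h1 := hE.inter A A hA hA h h
  rw [Set.inter_self] at h1
  have h2 := (ContinuousLinearMap.isSelfAdjoint_iff_isSymmetric.1 (hE.selfAdjoint A hA h)) ξ (E A ξ)
  have h3 : E A (E A ξ) = E A ξ := by
    conv_rhs => rw [h1]
    rfl
  simp only [ContinuousLinearMap.coe_coe] at h2
  rw [h3] at h2
  rw [← h2, inner_self_eq_norm_sq_to_K]
  push_cast
  rfl

lemma finite (hE : IsSpectralMeasure 𝔖 E μ) (hm : MeasurableSet 𝔖) (ξ : K) :
    IsFiniteMeasure (μ ξ) :=
  ⟨by rw [measure_apply hE hm ξ MeasurableSet.univ]; exact ENNReal.ofReal_lt_top⟩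

lemma measure_smul (hE : IsSpectralMeasure 𝔖 E μ) (hm : MeasurableSet 𝔖) (c : ℂ) (ξ : K) :
    μ (c • ξ) = ENNReal.ofReal (‖c‖ ^ 2) • μ ξ := by
  ext A hA
  rw [Measure.smul_apply, measure_apply hE hm _ hA, measure_apply hE hm _ hA,
    proj_inner hE (hA.inter hm) Set.inter_subset_right,
    proj_inner hE (hA.inter hm) Set.inter_subset_right, smul_eq_mul,
    ← ENNReal.ofReal_mul (by positivity), map_smul, norm_smul, mul_pow]
  simp only [Complex.ofReal_re]

lemma integral_smul' (hE : IsSpectralMeasure 𝔖 E μ) (hm : MeasurableSet 𝔖) (c : ℂ) (ξ : K)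
    (f : ℂ → ℂ) : ∫ z, f z ∂(μ (c • ξ)) = ((‖c‖ ^ 2 : ℝ) : ℂ) * ∫ z, f z ∂(μ ξ) := by
  rw [measure_smul hE hm, integral_smul_measure, ENNReal.toReal_ofReal (by positivity)]
  simp

lemma specInt_diag (hE : IsSpectralMeasure 𝔖 E μ) (hm : MeasurableSet 𝔖) (ξ : K)
    (f : ℂ → ℂ) : specInt μ f ξ ξ = ∫ z, f z ∂(μ ξ) := by
  have e1 : ξ + ξ = (2 : ℂ) • ξ := (two_smul ℂ ξ).symm
  have e2 : ξ - ξ = (0 : ℂ) • ξ := by simp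
  have e3 : ξ + Complex.I • ξ = (1 + Complex.I) • ξ := by rw [add_smul, one_smul]
  have e4 : ξ - Complex.I • ξ = (1 - Complex.I) • ξ := by rw [sub_smul, one_smul]
  have n3 : ‖(1 + Complex.I : ℂ)‖ ^ 2 = 2 := by
    rw [← Complex.normSq_eq_norm_sq]; norm_num [Complex.normSq_apply]
  have n4 : ‖(1 - Complex.I : ℂ)‖ ^ 2 = 2 := by
    rw [← Complex.normSq_eq_norm_sq]; norm_num [Complex.normSq_apply]
  unfold specInt
  rw [e1, e2, e3, e4]
  simp only [integral_smul' hE hm, n3, n4]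
  norm_num
  ring

lemma ae_mem (hE : IsSpectralMeasure 𝔖 E μ) (ξ : K) : ∀ᵐ z ∂(μ ξ), z ∈ 𝔖 :=
  hE.measure_compl ξ

lemma integrable (hE : IsSpectralMeasure 𝔖 E μ) (hm : MeasurableSet 𝔖) {f : ℂ → ℂ}
    (hf : BddBorelOn 𝔖 f) (ξ : K) : Integrable f (μ ξ) := by
  obtain ⟨h, M, hM⟩ := hf
  have := finite hE hm ξ
  exact Integrable.of_bound h.aestronglyMeasurable M ((ae_mem hE ξ).mono hM)

lemma bdd_const (c : ℂ) : BddBorelOn 𝔖 (fun _ => c) :=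
  ⟨measurable_const, ‖c‖, fun _ _ => le_rfl⟩

lemma bdd_add {f g : ℂ → ℂ} (hf : BddBorelOn 𝔖 f) (hg : BddBorelOn 𝔖 g) :
    BddBorelOn 𝔖 (fun z => f z + g z) := by
  obtain ⟨h, M, hM⟩ := hf
  obtain ⟨h', M', hM'⟩ := hg
  exact ⟨h.add h', M + M', fun z hz => (norm_add_le _ _).trans (add_le_add (hM z hz) (hM' z hz))⟩

lemma bdd_mul {f g : ℂ → ℂ} (hf : BddBorelOn 𝔖 f) (hg : BddBorelOn 𝔖 g) :
    BddBorelOn 𝔖 (fun z => f z * g z) := by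
  obtain ⟨h, M, hM⟩ := hf
  obtain ⟨h', M', hM'⟩ := hg
  refine ⟨h.mul h', M * M', fun z hz => ?_⟩
  rw [norm_mul]
  exact mul_le_mul (hM z hz) (hM' z hz) (norm_nonneg _) ((norm_nonneg _).trans (hM z hz))

lemma bdd_conj {f : ℂ → ℂ} (hf : BddBorelOn 𝔖 f) : BddBorelOn 𝔖 (fun z => conj (f z)) := by
  obtain ⟨h, M, hM⟩ := hf
  exact ⟨Complex.continuous_conj.measurable.comp h, M, fun z hz => by
    rw [RCLike.norm_conj]; exact hM z hz⟩

lemma bdd_ind {A : Set ℂ} (hA : MeasurableSet A) :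
    BddBorelOn 𝔖 (A.indicator (fun _ => (1 : ℂ))) :=
  ⟨measurable_const.indicator hA, 1, fun z _ => by
    by_cases h : z ∈ A <;> simp [h]⟩

/-- Induction principle for bounded Borel functions. -/
lemma bdd_induction {P : (ℂ → ℂ) → Prop}
    (h_ind : ∀ (c : ℂ) (A : Set ℂ), MeasurableSet A →
      P (fun z => c * A.indicator (fun _ => (1 : ℂ)) z))
    (h_add : ∀ f g, BddBorelOn 𝔖 f → BddBorelOn 𝔖 g → P f → P g → P (fun z => f z + g z))
    (h_lim : ∀ (F : ℕ → ℂ → ℂ) (f : ℂ → ℂ) (M : ℝ), (∀ n, Measurable (F n)) → Measurable f →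
      (∀ n, ∀ z ∈ 𝔖, ‖F n z‖ ≤ M) → (∀ z ∈ 𝔖, ‖f z‖ ≤ M) →
      (∀ z, Filter.Tendsto (fun n => F n z) Filter.atTop (nhds (f z))) → (∀ n, P (F n)) → P f)
    {f : ℂ → ℂ} (hf : BddBorelOn 𝔖 f) : P f := by
  have hs : ∀ s : SimpleFunc ℂ ℂ, BddBorelOn 𝔖 s ∧ P s := by
    intro s
    induction s using SimpleFunc.induction with
    | const c hA =>
      rename_i A
      have e : (⇑(SimpleFunc.piecewise A hA (SimpleFunc.const ℂ c) (SimpleFunc.const ℂ 0)))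
          = fun z => c * A.indicator (fun _ => (1 : ℂ)) z := by
        ext z
        by_cases h : z ∈ A <;> simp [h]
      rw [e]
      exact ⟨bdd_mul (bdd_const c) (bdd_ind hA), h_ind c A hA⟩
    | add _ hf hg =>
      exact ⟨bdd_add hf.1 hg.1, h_add _ _ hf.1 hg.1 hf.2 hg.2⟩
  obtain ⟨h, M, hM⟩ := hf
  refine h_lim (fun n => SimpleFunc.approxOn f h Set.univ 0 (Set.mem_univ _) n) f (M + M)
    (fun n => SimpleFunc.measurable _) h ?_ ?_ ?_ (fun n => (hs _).2)
  · intro n z hz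
    exact (SimpleFunc.norm_approxOn_zero_le h _ z n).trans (add_le_add (hM z hz) (hM z hz))
  · intro z hz
    have := hM z hz
    linarith [norm_nonneg (f z)]
  · intro z
    exact SimpleFunc.tendsto_approxOn h _ (by simp)

lemma specInt_tendsto (hE : IsSpectralMeasure 𝔖 E μ) (hm : MeasurableSet 𝔖)
    {F : ℕ → ℂ → ℂ} {f : ℂ → ℂ} {M : ℝ} (hF : ∀ n, Measurable (F n))
    (hM : ∀ n, ∀ z ∈ 𝔖, ‖F n z‖ ≤ M)
    (hl : ∀ z, Filter.Tendsto (fun n => F n z) Filter.atTop (nhds (f z))) (ξ η : K) :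
    Filter.Tendsto (fun n => specInt μ (F n) ξ η) Filter.atTop (nhds (specInt μ f ξ η)) := by
  have key : ∀ ζ : K, Filter.Tendsto (fun n => ∫ z, F n z ∂(μ ζ)) Filter.atTop
      (nhds (∫ z, f z ∂(μ ζ))) := by
    intro ζ
    have := finite hE hm ζ
    exact tendsto_integral_of_dominated_convergence (fun _ => M)
      (fun n => (hF n).aestronglyMeasurable) (integrable_const _)
      (fun n => (ae_mem hE ζ).mono (hM n)) (Filter.Eventually.of_forall hl)
  unfold specInt
  exact (((key _).sub (key _)).add (((key _).sub (key _)).const_mul _)).const_mul _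

lemma op_ext {A B : K →L[ℂ] K} (h : ∀ ξ, ⟪ξ, A ξ⟫_ℂ = ⟪ξ, B ξ⟫_ℂ) : A = B := by
  have : (A : K →ₗ[ℂ] K) = B := by
    rw [← ext_inner_map]
    intro x
    have h' := congrArg conj (h x)
    rw [inner_conj_symm, inner_conj_symm] at h'
    exact h'
  ext x
  exact congrArg (fun L : K →ₗ[ℂ] K => L x) this

variable {Φ : (ℂ → ℂ) → K →L[ℂ] K}

lemma diag (hE : IsSpectralMeasure 𝔖 E μ) (hm : MeasurableSet 𝔖)
    (hΦ : ∀ f : ℂ → ℂ, BddBorelOn 𝔖 f → ∀ ξ η : K, ⟪η, Φ f ξ⟫_ℂ = specInt μ f ξ η)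
    {f : ℂ → ℂ} (hf : BddBorelOn 𝔖 f) (ξ : K) : ⟪ξ, Φ f ξ⟫_ℂ = ∫ z, f z ∂(μ ξ) := by
  rw [hΦ f hf, specInt_diag hE hm]

lemma phi_add (hE : IsSpectralMeasure 𝔖 E μ) (hm : MeasurableSet 𝔖)
    (hΦ : ∀ f : ℂ → ℂ, BddBorelOn 𝔖 f → ∀ ξ η : K, ⟪η, Φ f ξ⟫_ℂ = specInt μ f ξ η)
    {f g : ℂ → ℂ} (hf : BddBorelOn 𝔖 f) (hg : BddBorelOn 𝔖 g) :
    Φ (fun z => f z + g z) = Φ f + Φ g := by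
  apply op_ext
  intro ξ
  rw [diag hE hm hΦ (bdd_add hf hg), add_apply, inner_add_right,
    diag hE hm hΦ hf, diag hE hm hΦ hg,
    integral_add (integrable hE hm hf ξ) (integrable hE hm hg ξ)]

lemma phi_smul (hE : IsSpectralMeasure 𝔖 E μ) (hm : MeasurableSet 𝔖)
    (hΦ : ∀ f : ℂ → ℂ, BddBorelOn 𝔖 f → ∀ ξ η : K, ⟪η, Φ f ξ⟫_ℂ = specInt μ f ξ η)
    {f : ℂ → ℂ} (hf : BddBorelOn 𝔖 f) (c : ℂ) :
    Φ (fun z => c * f z) = c • Φ f := by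
  apply op_ext
  intro ξ
  rw [diag hE hm hΦ (bdd_mul (bdd_const c) hf), smul_apply, inner_smul_right,
    diag hE hm hΦ hf, integral_const_mul]

lemma phi_ind (hE : IsSpectralMeasure 𝔖 E μ) (hm : MeasurableSet 𝔖)
    (hΦ : ∀ f : ℂ → ℂ, BddBorelOn 𝔖 f → ∀ ξ η : K, ⟪η, Φ f ξ⟫_ℂ = specInt μ f ξ η)
    {A : Set ℂ} (hA : MeasurableSet A) :
    Φ (A.indicator (fun _ => (1 : ℂ))) = E (A ∩ 𝔖) := by
  apply op_ext
  intro ξ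
  rw [diag hE hm hΦ (bdd_ind hA), integral_indicator_const _ hA, Measure.real,
    measure_apply hE hm ξ hA, proj_inner hE (hA.inter hm) Set.inter_subset_right,
    Complex.ofReal_re, ENNReal.toReal_ofReal (by positivity)]
  simp

lemma phi_one (hE : IsSpectralMeasure 𝔖 E μ) (hm : MeasurableSet 𝔖)
    (hΦ : ∀ f : ℂ → ℂ, BddBorelOn 𝔖 f → ∀ ξ η : K, ⟪η, Φ f ξ⟫_ℂ = specInt μ f ξ η)
    : Φ (fun _ => 1) = 1 := by
  have h := phi_ind hE hm hΦ MeasurableSet.univ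
  rw [Set.indicator_univ, Set.univ_inter, hE.univ] at h
  exact h

lemma phi_conj (hE : IsSpectralMeasure 𝔖 E μ) (hm : MeasurableSet 𝔖)
    (hΦ : ∀ f : ℂ → ℂ, BddBorelOn 𝔖 f → ∀ ξ η : K, ⟪η, Φ f ξ⟫_ℂ = specInt μ f ξ η)
    {f : ℂ → ℂ} (hf : BddBorelOn 𝔖 f) :
    Φ (fun z => conj (f z)) = ContinuousLinearMap.adjoint (Φ f) := by
  apply op_ext
  intro ξ
  rw [diag hE hm hΦ (bdd_conj hf), integral_conj, ← diag hE hm hΦ hf,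
    ContinuousLinearMap.adjoint_inner_right, inner_conj_symm]

lemma phi_mul_ind (hE : IsSpectralMeasure 𝔖 E μ) (hm : MeasurableSet 𝔖)
    (hΦ : ∀ f : ℂ → ℂ, BddBorelOn 𝔖 f → ∀ ξ η : K, ⟪η, Φ f ξ⟫_ℂ = specInt μ f ξ η)
    {B : Set ℂ} (hB : MeasurableSet B) {f : ℂ → ℂ} (hf : BddBorelOn 𝔖 f) :
    Φ (fun z => f z * B.indicator (fun _ => (1 : ℂ)) z)
      = Φ f ∘L Φ (B.indicator (fun _ => (1 : ℂ))) := by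
  have hb : BddBorelOn 𝔖 (B.indicator (fun _ => (1 : ℂ))) := bdd_ind hB
  refine bdd_induction (𝔖 := 𝔖)
    (P := fun f => Φ (fun z => f z * B.indicator (fun _ => (1 : ℂ)) z)
      = Φ f ∘L Φ (B.indicator (fun _ => (1 : ℂ)))) ?_ ?_ ?_ hf
  · intro c A hA
    have e : (fun z => c * A.indicator (fun _ => (1 : ℂ)) z * B.indicator (fun _ => (1 : ℂ)) z)
        = fun z => c * (A ∩ B).indicator (fun _ => (1 : ℂ)) z := by
      ext z
      by_cases h : z ∈ A <;> by_cases h' : z ∈ B <;> simp [h, h']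
    rw [e, phi_smul hE hm hΦ (bdd_ind (hA.inter hB)), phi_smul hE hm hΦ (bdd_ind hA),
      phi_ind hE hm hΦ hA, phi_ind hE hm hΦ hB, phi_ind hE hm hΦ (hA.inter hB),
      ContinuousLinearMap.smul_comp,
      ← hE.inter _ _ (hA.inter hm) (hB.inter hm) Set.inter_subset_right Set.inter_subset_right,
      Set.inter_inter_distrib_right]
  · intro f g hf hg ihf ihg
    have e : (fun z => (f z + g z) * B.indicator (fun _ => (1 : ℂ)) z)
        = fun z => f z * B.indicator (fun _ => (1 : ℂ)) z
          + g z * B.indicator (fun _ => (1 : ℂ)) z := by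
      ext z; ring
    rw [e, phi_add hE hm hΦ (bdd_mul hf hb) (bdd_mul hg hb), phi_add hE hm hΦ hf hg, ihf, ihg,
      ContinuousLinearMap.add_comp]
  · intro F f M hF hf hFM hfM hl ih
    have bF : ∀ n, BddBorelOn 𝔖 (F n) := fun n => ⟨hF n, M, hFM n⟩
    have bf : BddBorelOn 𝔖 f := ⟨hf, M, hfM⟩
    ext ξ
    apply ext_inner_left ℂ
    intro η
    rw [ContinuousLinearMap.comp_apply, hΦ _ (bdd_mul bf hb), hΦ _ bf]
    have t1 := specInt_tendsto hE hm hF hFM hl (Φ (B.indicator (fun _ => (1 : ℂ))) ξ) η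
    have t2 := specInt_tendsto (M := M) hE hm
      (F := fun n z => F n z * B.indicator (fun _ => (1 : ℂ)) z)
      (f := fun z => f z * B.indicator (fun _ => (1 : ℂ)) z) (fun n => (bdd_mul (bF n) hb).1)
      (fun n z hz => by
        refine le_trans ?_ (hFM n z hz)
        by_cases h : z ∈ B <;> simp [h]) (fun z => (hl z).mul_const _) ξ η
    refine tendsto_nhds_unique t2 (t1.congr fun n => ?_)
    rw [← hΦ _ (bF n), ← hΦ _ (bdd_mul (bF n) hb), ih n]
    rfl

lemma phi_mul (hE : IsSpectralMeasure 𝔖 E μ) (hm : MeasurableSet 𝔖)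
    (hΦ : ∀ f : ℂ → ℂ, BddBorelOn 𝔖 f → ∀ ξ η : K, ⟪η, Φ f ξ⟫_ℂ = specInt μ f ξ η)
    {f g : ℂ → ℂ} (hf : BddBorelOn 𝔖 f) (hg : BddBorelOn 𝔖 g) :
    Φ (fun z => f z * g z) = Φ f ∘L Φ g := by
  refine bdd_induction (𝔖 := 𝔖) (P := fun g => Φ (fun z => f z * g z) = Φ f ∘L Φ g) ?_ ?_ ?_ hg
  · intro c B hB
    have e : (fun z => f z * (c * B.indicator (fun _ => (1 : ℂ)) z))
        = fun z => c * (f z * B.indicator (fun _ => (1 : ℂ)) z) := by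
      ext z; ring
    rw [e, phi_smul hE hm hΦ (bdd_mul hf (bdd_ind hB)), phi_smul hE hm hΦ (bdd_ind hB),
      phi_mul_ind hE hm hΦ hB hf, ContinuousLinearMap.comp_smul]
  · intro g h hg hh ihg ihh
    have e : (fun z => f z * (g z + h z)) = fun z => f z * g z + f z * h z := by
      ext z; ring
    rw [e, phi_add hE hm hΦ (bdd_mul hf hg) (bdd_mul hf hh), phi_add hE hm hΦ hg hh, ihg, ihh,
      ContinuousLinearMap.comp_add]
  · intro F g M hF hg hFM hgM hl ih
    have bF : ∀ n, BddBorelOn 𝔖 (F n) := fun n => ⟨hF n, M, hFM n⟩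
    have bg : BddBorelOn 𝔖 g := ⟨hg, M, hgM⟩
    obtain ⟨M', hM'⟩ := hf.2
    ext ξ
    apply ext_inner_left ℂ
    intro η
    rw [ContinuousLinearMap.comp_apply, hΦ _ (bdd_mul hf bg),
      ← ContinuousLinearMap.adjoint_inner_left, hΦ _ bg]
    have t1 := specInt_tendsto hE hm hF hFM hl ξ (ContinuousLinearMap.adjoint (Φ f) η)
    have t2 := specInt_tendsto (M := M' * M) hE hm (F := fun n z => f z * F n z)
      (f := fun z => f z * g z) (fun n => (bdd_mul hf (bF n)).1)
      (fun n z hz => by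
        rw [norm_mul]
        exact mul_le_mul (hM' z hz) (hFM n z hz) (norm_nonneg _)
          ((norm_nonneg _).trans (hM' z hz))) (fun z => (hl z).const_mul _) ξ η
    refine tendsto_nhds_unique t2 (t1.congr fun n => ?_)
    rw [← hΦ _ (bF n), ← hΦ _ (bdd_mul hf (bF n)), ih n,
      ContinuousLinearMap.adjoint_inner_left]
    rfl

lemma phi_sum (hE : IsSpectralMeasure 𝔖 E μ) (hm : MeasurableSet 𝔖)
    (hΦ : ∀ f : ℂ → ℂ, BddBorelOn 𝔖 f → ∀ ξ η : K, ⟪η, Φ f ξ⟫_ℂ = specInt μ f ξ η)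
    {ι : Type*} (s : Finset ι) (f : ι → ℂ → ℂ) (hf : ∀ i, BddBorelOn 𝔖 (f i)) :
    BddBorelOn 𝔖 (fun z => ∑ i ∈ s, f i z) ∧
      Φ (fun z => ∑ i ∈ s, f i z) = ∑ i ∈ s, Φ (f i) := by
  classical
  induction s using Finset.induction_on with
  | empty =>
    refine ⟨by simpa using bdd_const 0, ?_⟩
    have := phi_smul hE hm hΦ (bdd_const 1) 0
    simpa using this
  | insert a s ha ih =>
    simp only [Finset.sum_insert ha]
    exact ⟨bdd_add (hf a) ih.1, by rw [phi_add hE hm hΦ (hf a) ih.1, ih.2]⟩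

lemma phi_pow (hE : IsSpectralMeasure 𝔖 E μ) (hm : MeasurableSet 𝔖)
    (hΦ : ∀ f : ℂ → ℂ, BddBorelOn 𝔖 f → ∀ ξ η : K, ⟪η, Φ f ξ⟫_ℂ = specInt μ f ξ η)
    {f : ℂ → ℂ} (hf : BddBorelOn 𝔖 f) (n : ℕ) :
    BddBorelOn 𝔖 (fun z => f z ^ n) ∧ Φ (fun z => f z ^ n) = Φ f ^ n := by
  induction n with
  | zero =>
    simp only [pow_zero]
    exact ⟨bdd_const 1, phi_one hE hm hΦ⟩
  | succ n ih =>
    simp only [pow_succ]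
    exact ⟨bdd_mul ih.1 hf, by rw [phi_mul hE hm hΦ ih.1 hf, ih.2]; rfl⟩

end StemCalc

/-- **Theorem: bounded Borel functional calculus for real normal operators.**
On the stem functions, the functional calculus `Φ(f) = f(S)|H` is `ℝ`-linear, multiplicative
and unital; `Φ(conj f) = Φ(f)*` and each `Φ(f)` is normal on `H`; for real polynomials
`p(z) = Σ_{j=1}^n a_j z^j` one has `Φ(p) = Σ a_j T^j` with `T = S|H`; and
`‖Φ(f)x‖² = ∫_𝔖 |f|² dμ_{x,x}` for `x ∈ H`. -/
theorem bounded_stem_functional_calculus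
    {K : Type*} [NormedAddCommGroup K] [InnerProductSpace ℂ K] [CompleteSpace K]
    {C : K → K} (hC : IsConjugation C) (S : K →L[ℂ] K)
    (hnormal : (ContinuousLinearMap.adjoint S) ∘L S = S ∘L (ContinuousLinearMap.adjoint S))
    (hflat : ∀ ξ : K, C (S (C ξ)) = S ξ)
    (E : Set ℂ → K →L[ℂ] K) (μ : K → Measure ℂ)
    (hE : IsSpectralMeasure (spectrum ℂ S) E μ)
    (hSE : ∀ ξ η : K, ⟪η, S ξ⟫_ℂ = specInt μ (fun z => z) ξ η)
    (Φ : (ℂ → ℂ) → K →L[ℂ] K)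
    (hΦ : ∀ f : ℂ → ℂ, BddBorelOn (spectrum ℂ S) f →
      ∀ ξ η : K, ⟪η, Φ f ξ⟫_ℂ = specInt μ f ξ η) :
    -- `ℝ`-linearity
    (∀ f g : ℂ → ℂ, BddBorelOn (spectrum ℂ S) f → IsStemFun (spectrum ℂ S) E f →
      BddBorelOn (spectrum ℂ S) g → IsStemFun (spectrum ℂ S) E g → ∀ a b : ℝ, ∀ ξ : K,
      Φ (fun z => (a : ℂ) * f z + (b : ℂ) * g z) ξ = a • Φ f ξ + b • Φ g ξ) ∧
    -- multiplicativity
    (∀ f g : ℂ → ℂ, BddBorelOn (spectrum ℂ S) f → IsStemFun (spectrum ℂ S) E f →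
      BddBorelOn (spectrum ℂ S) g → IsStemFun (spectrum ℂ S) E g → ∀ ξ : K,
      Φ (fun z => f z * g z) ξ = Φ f (Φ g ξ)) ∧
    -- unitality
    (∀ ξ : K, Φ (fun _ => 1) ξ = ξ) ∧
    -- `Φ(conj f) = Φ(f)*` on the real subspace `H`
    (∀ f : ℂ → ℂ, BddBorelOn (spectrum ℂ S) f → IsStemFun (spectrum ℂ S) E f →
      ∀ u v : K, C u = u → C v = v →
      ⟪Φ (fun z => conj (f z)) u, v⟫_ℂ = ⟪u, Φ f v⟫_ℂ) ∧
    -- each `Φ(f)` is normal on `H`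
    (∀ f : ℂ → ℂ, BddBorelOn (spectrum ℂ S) f → IsStemFun (spectrum ℂ S) E f →
      ∀ u : K, C u = u →
      Φ f (Φ (fun z => conj (f z)) u) = Φ (fun z => conj (f z)) (Φ f u)) ∧
    -- real polynomials
    (∀ (n : ℕ) (a : Fin n → ℝ), ∀ ξ : K,
      Φ (fun z => ∑ j : Fin n, (a j : ℂ) * z ^ ((j : ℕ) + 1)) ξ
        = ∑ j : Fin n, a j • ((S ^ ((j : ℕ) + 1)) ξ)) ∧
    -- the norm identity on `H`
    (∀ f : ℂ → ℂ, BddBorelOn (spectrum ℂ S) f → IsStemFun (spectrum ℂ S) E f →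
      ∀ x : K, C x = x → ‖Φ f x‖ ^ 2 = ∫ z, ‖f z‖ ^ 2 ∂(μ x)) := by
  have hm : MeasurableSet (spectrum ℂ S) := (spectrum.isCompact S).isClosed.measurableSet
  have hid : BddBorelOn (spectrum ℂ S) (fun z => z) := by
    obtain ⟨M, hM⟩ := (spectrum.isCompact (𝕜 := ℂ) S).isBounded.exists_norm_le
    exact ⟨measurable_id, M, hM⟩
  have hS : Φ (fun z => z) = S := by
    ext ξ
    apply ext_inner_left ℂ
    intro η
    rw [hΦ _ hid, hSE]
  refine ⟨?_, ?_, ?_, ?_, ?_, ?_, ?_⟩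
  · intro f g hf _ hg _ a b ξ
    rw [StemCalc.phi_add hE hm hΦ (StemCalc.bdd_mul (StemCalc.bdd_const _) hf)
      (StemCalc.bdd_mul (StemCalc.bdd_const _) hg), StemCalc.phi_smul hE hm hΦ hf,
      StemCalc.phi_smul hE hm hΦ hg]
    simp
  · intro f g hf _ hg _ ξ
    rw [StemCalc.phi_mul hE hm hΦ hf hg]
    rfl
  · intro ξ
    rw [StemCalc.phi_one hE hm hΦ]
    rfl
  · intro f hf _ u v _ _
    rw [StemCalc.phi_conj hE hm hΦ hf, ContinuousLinearMap.adjoint_inner_left]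
  · intro f hf _ u _
    have h1 := StemCalc.phi_mul hE hm hΦ hf (StemCalc.bdd_conj hf)
    have h2 := StemCalc.phi_mul hE hm hΦ (StemCalc.bdd_conj hf) hf
    have e : (fun z => f z * conj (f z)) = fun z => conj (f z) * f z := by
      ext z; ring
    rw [e, h2] at h1
    exact (congrArg (fun L : K →L[ℂ] K => L u) h1).symm
  · intro n a ξ
    have hp := fun k => StemCalc.phi_pow hE hm hΦ hid k
    rw [(StemCalc.phi_sum hE hm hΦ Finset.univ
      (fun (j : Fin n) z => (a j : ℂ) * z ^ ((j : ℕ) + 1))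
      (fun j => StemCalc.bdd_mul (StemCalc.bdd_const _) (hp _).1)).2, sum_apply]
    refine Finset.sum_congr rfl fun j _ => ?_
    rw [StemCalc.phi_smul hE hm hΦ (hp _).1, (hp _).2, hS]
    simp
  · intro f hf _ x _
    have h2 := StemCalc.phi_mul hE hm hΦ (StemCalc.bdd_conj hf) hf
    have h3 := StemCalc.diag hE hm hΦ (StemCalc.bdd_mul (StemCalc.bdd_conj hf) hf) x
    rw [h2, ContinuousLinearMap.comp_apply, StemCalc.phi_conj hE hm hΦ hf,
      ContinuousLinearMap.adjoint_inner_right, inner_self_eq_norm_sq_to_K] at h3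
    have e : (fun z => conj (f z) * f z) = fun z => ((‖f z‖ ^ 2 : ℝ) : ℂ) := by
      ext z
      rw [mul_comm, Complex.mul_conj, Complex.normSq_eq_norm_sq]
    rw [e, integral_complex_ofReal] at h3
    exact Complex.ofReal_injective (by simpa using h3)
end

section
/- Let C be a conjugation on the complex Hilbert space K, and let S be a closed densely defined normal operator in K with C(D(S)) = D(S) and C(S(Cξ)) = Sξ for all ξ ∈ D(S); let E be the spectral measure of S on 𝔖 = σ(S). Then for every (not necessarily bounded) Borel E-stem function f : 𝔖 → ℂ: C(D_f) = D_f; Ψ(f)(Cξ) = C(Ψ(f)ξ) for all ξ ∈ D_f; consequently Ψ(f) maps D_f ∩ H into H; and ‖Ψ(f)x‖² = ∫_𝔖 |f|² dμ_{x,x} for all x ∈ D_f ∩ H. -/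
open MeasureTheory
open scoped InnerProductSpace ComplexConjugate ENNReal

/-- The point `z₀` lies in the resolvent set of the (possibly unbounded) operator `S`:
`z₀ − S : D(S) → K` is bijective with bounded everywhere-defined inverse. -/
def HasBoundedResolventAt {K : Type*} [NormedAddCommGroup K] [InnerProductSpace ℂ K]
    (S : K →ₗ.[ℂ] K) (z₀ : ℂ) : Prop :=
  ∃ R : K →L[ℂ] K, (∀ ξ : K, ∃ h : R ξ ∈ S.domain, z₀ • R ξ - S ⟨R ξ, h⟩ = ξ) ∧
    (∀ ξ : S.domain, R (z₀ • (ξ : K) - S ξ) = ξ)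

/-- The spectrum of a (possibly unbounded) operator `S` in `K`. -/
def pmapSpectrum {K : Type*} [NormedAddCommGroup K] [InnerProductSpace ℂ K]
    (S : K →ₗ.[ℂ] K) : Set ℂ :=
  {z₀ | ¬ HasBoundedResolventAt S z₀}

/-- A closed densely defined normal operator: `D(S*) = D(S)` and `‖Sξ‖ = ‖S*ξ‖` on the
common domain (equivalently `SS* = S*S` with equality of domains). -/
def IsNormalPMap {K : Type*} [NormedAddCommGroup K] [InnerProductSpace ℂ K] [CompleteSpace K]
    (S : K →ₗ.[ℂ] K) : Prop :=
  Dense (S.domain : Set K) ∧ S.IsClosed ∧ S.adjoint.domain = S.domain ∧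
    ∀ (ξ : K) (h1 : ξ ∈ S.domain) (h2 : ξ ∈ S.adjoint.domain),
      ‖S ⟨ξ, h1⟩‖ = ‖S.adjoint ⟨ξ, h2⟩‖

/-- The natural domain `D_f = {ξ : ∫ |f|² dμ_{ξ,ξ} < ∞}` of the operator `Ψ(f)`. -/
def specDomain {K : Type*} [NormedAddCommGroup K] [InnerProductSpace ℂ K]
    (μ : K → MeasureTheory.Measure ℂ) (f : ℂ → ℂ) : Set K :=
  {ξ | ∫⁻ z, (‖f z‖₊ : ENNReal) ^ 2 ∂(μ ξ) < ⊤}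


section SpectralBasics

variable {K : Type*} [NormedAddCommGroup K] [InnerProductSpace ℂ K] [CompleteSpace K]

/-- The spectral measure extended to all subsets of the plane. -/
def extE (𝔖 : Set ℂ) (E : Set ℂ → K →L[ℂ] K) (A : Set ℂ) : K →L[ℂ] K := E (A ∩ 𝔖)

variable {𝔖 : Set ℂ} {E : Set ℂ → K →L[ℂ] K} {μ : K → Measure ℂ}

theorem extE_sa (hE : IsSpectralMeasure 𝔖 E μ) (hm : MeasurableSet 𝔖) {A : Set ℂ}
    (hA : MeasurableSet A) (x y : K) : ⟪x, extE 𝔖 E A y⟫_ℂ = ⟪extE 𝔖 E A x, y⟫_ℂ := by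
  have h := hE.selfAdjoint (A ∩ 𝔖) (hA.inter hm) Set.inter_subset_right
  rw [ContinuousLinearMap.isSelfAdjoint_iff_isSymmetric] at h
  exact (h x y).symm

theorem extE_inter (hE : IsSpectralMeasure 𝔖 E μ) (hm : MeasurableSet 𝔖) {A B : Set ℂ}
    (hA : MeasurableSet A) (hB : MeasurableSet B) (x : K) :
    extE 𝔖 E A (extE 𝔖 E B x) = extE 𝔖 E (A ∩ B) x := by
  have h := hE.inter (A ∩ 𝔖) (B ∩ 𝔖) (hA.inter hm) (hB.inter hm) Set.inter_subset_right
    Set.inter_subset_right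
  unfold extE
  have e : A ∩ B ∩ 𝔖 = A ∩ 𝔖 ∩ (B ∩ 𝔖) := by ext z; simp; tauto
  rw [e, h]; rfl

theorem extE_univ (hE : IsSpectralMeasure 𝔖 E μ) (x : K) : extE 𝔖 E Set.univ x = x := by
  simp [extE, hE.univ]

theorem extE_empty (hE : IsSpectralMeasure 𝔖 E μ) (x : K) : extE 𝔖 E ∅ x = 0 := by
  simp [extE, hE.empty]

theorem extE_inner_self (hE : IsSpectralMeasure 𝔖 E μ) (hm : MeasurableSet 𝔖) {A : Set ℂ}
    (hA : MeasurableSet A) (x : K) : ⟪x, extE 𝔖 E A x⟫_ℂ = ((‖extE 𝔖 E A x‖ ^ 2 : ℝ) : ℂ) := by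
  have h := extE_inter hE hm hA hA x
  rw [Set.inter_self] at h
  conv_lhs => rw [← h]
  rw [extE_sa hE hm hA, inner_self_eq_norm_sq_to_K]
  norm_cast

theorem mu_eq (hE : IsSpectralMeasure 𝔖 E μ) (hm : MeasurableSet 𝔖) {A : Set ℂ}
    (hA : MeasurableSet A) (x : K) : μ x A = ENNReal.ofReal (‖extE 𝔖 E A x‖ ^ 2) := by
  have h1 : μ x A = μ x (A ∩ 𝔖) := by
    refine (measure_inter_conull' ?_).symm
    exact measure_mono_null (fun z hz => hz.2) (hE.measure_compl x)
  have h2 := hE.measure_eq x (A ∩ 𝔖) (hA.inter hm) Set.inter_subset_right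
  have h3 := extE_inner_self hE hm hA x
  unfold extE at *
  rw [h1, h2, h3, Complex.ofReal_re]

theorem mu_eq_enorm (hE : IsSpectralMeasure 𝔖 E μ) (hm : MeasurableSet 𝔖) {A : Set ℂ}
    (hA : MeasurableSet A) (x : K) : μ x A = ‖extE 𝔖 E A x‖ₑ ^ 2 := by
  rw [mu_eq hE hm hA, ENNReal.ofReal_pow (norm_nonneg _), ofReal_norm]

theorem mu_univ (hE : IsSpectralMeasure 𝔖 E μ) (hm : MeasurableSet 𝔖) (x : K) :
    μ x Set.univ = ‖x‖ₑ ^ 2 := by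
  rw [mu_eq_enorm hE hm MeasurableSet.univ, extE_univ hE]

theorem mu_finite (hE : IsSpectralMeasure 𝔖 E μ) (hm : MeasurableSet 𝔖) (x : K) :
    IsFiniteMeasure (μ x) := by
  constructor
  rw [mu_univ hE hm]
  exact ENNReal.pow_lt_top (by simp)

theorem mu_real (hE : IsSpectralMeasure 𝔖 E μ) (hm : MeasurableSet 𝔖) {A : Set ℂ}
    (hA : MeasurableSet A) (x : K) : (((μ x).real A : ℝ) : ℂ) = ⟪x, extE 𝔖 E A x⟫_ℂ := by
  rw [extE_inner_self hE hm hA, Measure.real, mu_eq hE hm hA, ENNReal.toReal_ofReal (by positivity)]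

theorem extE_union (hE : IsSpectralMeasure 𝔖 E μ) (hm : MeasurableSet 𝔖) {A B : Set ℂ}
    (hA : MeasurableSet A) (hB : MeasurableSet B) (hd : Disjoint A B) (x : K) :
    extE 𝔖 E (A ∪ B) x = extE 𝔖 E A x + extE 𝔖 E B x := by
  have key : ((extE 𝔖 E (A ∪ B) : K →L[ℂ] K) : K →ₗ[ℂ] K)
      = ((extE 𝔖 E A + extE 𝔖 E B : K →L[ℂ] K) : K →ₗ[ℂ] K) := by
    rw [← ext_inner_map]
    intro x
    have := mu_finite hE hm x
    have h1 := measureReal_union (μ := μ x) hd hB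
    have h2 : (((μ x).real (A ∪ B) : ℝ) : ℂ) = ((μ x).real A : ℝ) + ((μ x).real B : ℝ) := by
      rw [h1]; push_cast; rfl
    rw [mu_real hE hm (hA.union hB), mu_real hE hm hA, mu_real hE hm hB,
      extE_sa hE hm hA, extE_sa hE hm hB, extE_sa hE hm (hA.union hB)] at h2
    simpa [inner_add_left] using h2
  exact congrArg (fun T : K →ₗ[ℂ] K => T x) key

theorem mu_extE (hE : IsSpectralMeasure 𝔖 E μ) (hm : MeasurableSet 𝔖) {A : Set ℂ}
    (hA : MeasurableSet A) (x : K) : μ (extE 𝔖 E A x) = (μ x).restrict A := by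
  ext B hB
  rw [Measure.restrict_apply hB, mu_eq hE hm hB, mu_eq hE hm (hB.inter hA), extE_inter hE hm hB hA]

theorem extE_compl (hE : IsSpectralMeasure 𝔖 E μ) (hm : MeasurableSet 𝔖) {A : Set ℂ}
    (hA : MeasurableSet A) (x : K) : x - extE 𝔖 E A x = extE 𝔖 E Aᶜ x := by
  have h := extE_union hE hm hA hA.compl disjoint_compl_right x
  rw [Set.union_compl_self, extE_univ hE] at h
  nth_rw 1 [h]; abel

theorem extE_fix_iff (hE : IsSpectralMeasure 𝔖 E μ) (hm : MeasurableSet 𝔖) {A : Set ℂ}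
    (hA : MeasurableSet A) (x : K) : extE 𝔖 E A x = x ↔ μ x Aᶜ = 0 := by
  rw [mu_eq_enorm hE hm hA.compl, ← extE_compl hE hm hA]
  rw [eq_comm (a := extE 𝔖 E A x), pow_eq_zero_iff two_ne_zero, enorm_eq_zero, sub_eq_zero]

theorem mu_add_le (hE : IsSpectralMeasure 𝔖 E μ) (hm : MeasurableSet 𝔖) (x y : K) :
    μ (x + y) ≤ (2 : ENNReal) • (μ x + μ y) := by
  rw [Measure.le_iff]
  intro A hA
  simp only [Measure.smul_apply, Measure.add_apply, smul_eq_mul]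
  rw [mu_eq hE hm hA, mu_eq hE hm hA, mu_eq hE hm hA,
    ← ENNReal.ofReal_add (by positivity) (by positivity),
    ← ENNReal.ofReal_ofNat 2, ← ENNReal.ofReal_mul (by norm_num), map_add]
  apply ENNReal.ofReal_le_ofReal
  have h := parallelogram_law_with_norm ℂ (extE 𝔖 E A x) (extE 𝔖 E A y)
  nlinarith [sq_nonneg ‖extE 𝔖 E A x - extE 𝔖 E A y‖]

theorem mu_smul (hE : IsSpectralMeasure 𝔖 E μ) (hm : MeasurableSet 𝔖) (a : ℂ) (x : K) :
    μ (a • x) = (‖a‖ₑ ^ 2) • μ x := by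
  ext A hA
  simp only [Measure.smul_apply, smul_eq_mul]
  rw [mu_eq_enorm hE hm hA, mu_eq_enorm hE hm hA, map_smul, enorm_smul, mul_pow]

theorem specDomain_add (hE : IsSpectralMeasure 𝔖 E μ) (hm : MeasurableSet 𝔖) {f : ℂ → ℂ}
    {x y : K} (hx : x ∈ specDomain μ f) (hy : y ∈ specDomain μ f) : x + y ∈ specDomain μ f := by
  unfold specDomain at *
  simp only [Set.mem_ofPred_eq] at *
  refine lt_of_le_of_lt (lintegral_mono' (mu_add_le hE hm x y) le_rfl) ?_
  rw [lintegral_smul_measure, lintegral_add_measure]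
  exact ENNReal.mul_lt_top (by simp) (by simp [hx, hy])

theorem specDomain_smul (hE : IsSpectralMeasure 𝔖 E μ) (hm : MeasurableSet 𝔖) {f : ℂ → ℂ}
    {x : K} (a : ℂ) (hx : x ∈ specDomain μ f) : a • x ∈ specDomain μ f := by
  unfold specDomain at *
  simp only [Set.mem_ofPred_eq] at *
  rw [mu_smul hE hm, lintegral_smul_measure]
  exact ENNReal.mul_lt_top (ENNReal.pow_lt_top (by simp)) hx

theorem specDomain_sub (hE : IsSpectralMeasure 𝔖 E μ) (hm : MeasurableSet 𝔖) {f : ℂ → ℂ}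
    {x y : K} (hx : x ∈ specDomain μ f) (hy : y ∈ specDomain μ f) : x - y ∈ specDomain μ f := by
  have h := specDomain_add hE hm hx (specDomain_smul hE hm (-1) hy)
  simpa [sub_eq_add_neg] using h

theorem specDomain_dense (hE : IsSpectralMeasure 𝔖 E μ) (hm : MeasurableSet 𝔖) {f : ℂ → ℂ}
    (hf : Measurable f) : Dense (specDomain μ f) := by
  intro x
  have := mu_finite hE hm x
  let B : ℕ → Set ℂ := fun n => {z | ‖f z‖ ≤ n}
  have hB : ∀ n, MeasurableSet (B n) := fun n => measurableSet_le hf.norm measurable_const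
  have hmono : Antitone (fun n => (B n)ᶜ) := by
    intro m n hmn
    apply Set.compl_subset_compl.mpr
    intro z hz
    have : (m : ℝ) ≤ n := by exact_mod_cast hmn
    exact le_trans hz this
  have hlim : Filter.Tendsto (fun n => μ x ((B n)ᶜ)) Filter.atTop (nhds 0) := by
    have h := tendsto_measure_iInter_atTop (μ := μ x) (s := fun n => (B n)ᶜ)
      (fun n => (hB n).compl.nullMeasurableSet) hmono ⟨0, measure_ne_top _ _⟩
    have he : (⋂ n, (B n)ᶜ) = ∅ := by
      ext z
      simp only [Set.mem_iInter, Set.mem_empty_iff_false, iff_false, not_forall]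
      obtain ⟨n, hn⟩ := exists_nat_ge ‖f z‖
      exact ⟨n, fun h => h hn⟩
    rw [he, measure_empty] at h
    exact h
  refine mem_closure_of_tendsto (f := fun n => extE 𝔖 E (B n) x) (b := Filter.atTop) ?_ ?_
  · rw [tendsto_iff_norm_sub_tendsto_zero]
    have h2 : Filter.Tendsto (fun n => ((μ x ((B n)ᶜ)).toReal) ^ (1/2 : ℝ)) Filter.atTop (nhds 0) := by
      have h3 := (ENNReal.tendsto_toReal (by simp)).comp hlim
      have h4 := h3.rpow_const (p := (1/2 : ℝ)) (Or.inr (by norm_num))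
      simpa using h4
    refine h2.congr fun n => ?_
    rw [mu_eq hE hm (hB n).compl, ENNReal.toReal_ofReal (by positivity),
      ← extE_compl hE hm (hB n), ← Real.sqrt_eq_rpow, Real.sqrt_sq (norm_nonneg _), norm_sub_rev]
  · refine Filter.Eventually.of_forall fun n => ?_
    change ∫⁻ z, (‖f z‖₊ : ENNReal) ^ 2 ∂(μ (extE 𝔖 E (B n) x)) < ⊤
    rw [mu_extE hE hm (hB n)]
    refine lt_of_le_of_lt (setLIntegral_mono' (g := fun _ => (n : ENNReal) ^ 2) (hB n) ?_) ?_
    · intro z hz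
      have : ‖f z‖₊ ≤ (n : NNReal) := by
        have hz' : ‖f z‖ ≤ n := hz
        rw [← NNReal.coe_le_coe]; simpa using hz'
      gcongr
      exact_mod_cast this
    · rw [setLIntegral_const]
      exact ENNReal.mul_lt_top (ENNReal.pow_lt_top (by simp)) (measure_lt_top _ _)

theorem memLp_of_specDomain {f : ℂ → ℂ} (hf : Measurable f) {x : K}
    (hx : x ∈ specDomain μ f) : MemLp f 2 (μ x) := by
  refine ⟨hf.aestronglyMeasurable, ?_⟩
  rw [eLpNorm_lt_top_iff_lintegral_rpow_enorm_lt_top (by simp) (by simp)]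
  simp only [ENNReal.toReal_ofNat, ENNReal.rpow_ofNat]
  exact hx

theorem eLpNorm_two_sq (f : ℂ → ℂ) (ν : Measure ℂ) :
    eLpNorm f 2 ν ^ 2 = ∫⁻ z, ‖f z‖ₑ ^ 2 ∂ν := by
  have := eLpNorm_nnreal_pow_eq_lintegral (f := f) (μ := ν) (p := 2) (by simp)
  simpa using this

end SpectralBasics
section SimpleCalculus

open Filter Topology

variable {K : Type*} [NormedAddCommGroup K] [InnerProductSpace ℂ K] [CompleteSpace K]

/-- The functional calculus of a simple function applied to a vector. -/
noncomputable def simpCalc (𝔖 : Set ℂ) (E : Set ℂ → K →L[ℂ] K) (g : SimpleFunc ℂ ℂ) (x : K) : K :=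
  ∑ c ∈ g.range, c • extE 𝔖 E (g ⁻¹' {c}) x

variable {𝔖 : Set ℂ} {E : Set ℂ → K →L[ℂ] K} {μ : K → Measure ℂ}

theorem simpCalc_sub (hE : IsSpectralMeasure 𝔖 E μ) (hm : MeasurableSet 𝔖)
    (g h : SimpleFunc ℂ ℂ) (x : K) :
    simpCalc 𝔖 E (g - h) x = simpCalc 𝔖 E g x - simpCalc 𝔖 E h x := by
  have := mu_finite hE hm x
  let T : Set ℂ → ℂ →L[ℝ] K := fun A =>
    (ContinuousLinearMap.id ℝ ℂ).smulRight (extE 𝔖 E A x)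
  have hT : FinMeasAdditive (μ x) T := by
    intro s t hs ht _ _ hd
    ext c
    simp [T, extE_union hE hm hs ht hd]
  have key := SimpleFunc.setToSimpleFunc_sub T hT (f := g) (g := h)
    (SimpleFunc.integrable_of_isFiniteMeasure g) (SimpleFunc.integrable_of_isFiniteMeasure h)
  exact key

theorem simpCalc_enorm (hE : IsSpectralMeasure 𝔖 E μ) (hm : MeasurableSet 𝔖)
    (g : SimpleFunc ℂ ℂ) (x : K) :
    ‖simpCalc 𝔖 E g x‖ₑ ^ 2 = ∫⁻ z, ‖g z‖ₑ ^ 2 ∂(μ x) := by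
  have h1 : ‖simpCalc 𝔖 E g x‖ ^ 2 = ∑ c ∈ g.range, ‖c • extE 𝔖 E (g ⁻¹' {c}) x‖ ^ 2 := by
    unfold simpCalc
    rw [← Complex.ofReal_inj]
    push_cast
    have := inner_self_eq_norm_sq_to_K (𝕜 := ℂ) (∑ c ∈ g.range, c • extE 𝔖 E (g ⁻¹' {c}) x)
    refine this.symm.trans ?_
    rw [sum_inner]
    refine Finset.sum_congr rfl fun c hc => ?_
    rw [inner_sum, Finset.sum_eq_single c]
    · rw [inner_self_eq_norm_sq_to_K]; norm_cast
    · intro d _ hdc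
      rw [inner_smul_left, inner_smul_right, ← extE_sa hE hm (g.measurableSet_fiber c),
        extE_inter hE hm (g.measurableSet_fiber c) (g.measurableSet_fiber d)]
      have : g ⁻¹' {c} ∩ g ⁻¹' {d} = ∅ := by
        ext z
        simp only [Set.mem_inter_iff, Set.mem_preimage, Set.mem_singleton_iff,
          Set.mem_empty_iff_false, iff_false, not_and]
        intro h1 h2
        exact hdc (h2.symm.trans h1)
      rw [this, extE_empty hE]; simp
    · intro h; exact absurd hc h
  have h2 : ‖simpCalc 𝔖 E g x‖ₑ ^ 2 = ∑ c ∈ g.range, ‖c • extE 𝔖 E (g ⁻¹' {c}) x‖ₑ ^ 2 := by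
    rw [← ofReal_norm, ← ENNReal.ofReal_pow (norm_nonneg _), h1,
      ENNReal.ofReal_sum_of_nonneg (fun _ _ => by positivity)]
    refine Finset.sum_congr rfl fun c _ => ?_
    rw [ENNReal.ofReal_pow (norm_nonneg _), ofReal_norm]
  have h_map : (fun z => ‖g z‖ₑ ^ 2) = g.map (fun c => ‖c‖ₑ ^ 2) := by ext z; simp
  rw [h2, h_map, SimpleFunc.lintegral_eq_lintegral, SimpleFunc.map_lintegral]
  refine Finset.sum_congr rfl fun c _ => ?_
  rw [mu_eq_enorm hE hm (g.measurableSet_fiber c), enorm_smul, mul_pow]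

theorem simpCalc_enorm' (hE : IsSpectralMeasure 𝔖 E μ) (hm : MeasurableSet 𝔖)
    (g : SimpleFunc ℂ ℂ) (x : K) :
    ‖simpCalc 𝔖 E g x‖ₑ = eLpNorm g 2 (μ x) := by
  have h := simpCalc_enorm hE hm g x
  rw [← eLpNorm_two_sq] at h
  exact (ENNReal.pow_right_strictMono two_ne_zero).injective h

theorem simpCalc_extE (hE : IsSpectralMeasure 𝔖 E μ) (hm : MeasurableSet 𝔖) {A : Set ℂ}
    (hA : MeasurableSet A) (g : SimpleFunc ℂ ℂ) (x : K) :
    extE 𝔖 E A (simpCalc 𝔖 E g x) = simpCalc 𝔖 E g (extE 𝔖 E A x) := by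
  unfold simpCalc
  rw [map_sum]
  refine Finset.sum_congr rfl fun c _ => ?_
  rw [map_smul, extE_inter hE hm hA (g.measurableSet_fiber c),
    extE_inter hE hm (g.measurableSet_fiber c) hA, Set.inter_comm]

theorem simpCalc_specInt (hE : IsSpectralMeasure 𝔖 E μ) (hm : MeasurableSet 𝔖)
    (g : SimpleFunc ℂ ℂ) (x y : K) :
    specInt μ g x y = ⟪y, simpCalc 𝔖 E g x⟫_ℂ := by
  have hi : ∀ w : K, ∫ z, g z ∂(μ w) = ∑ c ∈ g.range, c * ⟪w, extE 𝔖 E (g ⁻¹' {c}) w⟫_ℂ := by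
    intro w
    have := mu_finite hE hm w
    rw [SimpleFunc.integral_eq_sum g (SimpleFunc.integrable_of_isFiniteMeasure g)]
    refine Finset.sum_congr rfl fun c _ => ?_
    rw [← mu_real hE hm (g.measurableSet_fiber c), Complex.real_smul, mul_comm]
  unfold specInt simpCalc
  rw [hi, hi, hi, hi, inner_sum, ← Finset.sum_sub_distrib, ← Finset.sum_sub_distrib,
    Finset.mul_sum, ← Finset.sum_add_distrib, Finset.mul_sum]
  refine Finset.sum_congr rfl fun c _ => ?_
  simp only [map_add, map_sub, map_smul, inner_add_left, inner_add_right, inner_sub_left,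
    inner_sub_right, inner_smul_left, inner_smul_right, Complex.conj_I]
  ring_nf
  simp only [Complex.I_sq]
  ring

theorem specDomain_integrable (hE : IsSpectralMeasure 𝔖 E μ) (hm : MeasurableSet 𝔖) {f : ℂ → ℂ}
    (hf : Measurable f) {x : K} (hx : x ∈ specDomain μ f) : Integrable f (μ x) := by
  have := mu_finite hE hm x
  exact (memLp_of_specDomain hf hx).integrable (by norm_num)

/-- Simple functions approximating `f`. -/
noncomputable def apx (f : ℂ → ℂ) (hf : Measurable f) (n : ℕ) : SimpleFunc ℂ ℂ :=
  SimpleFunc.approxOn f hf Set.univ 0 (Set.mem_univ _) n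

theorem apx_specInt (hE : IsSpectralMeasure 𝔖 E μ) (hm : MeasurableSet 𝔖) {f : ℂ → ℂ}
    (hf : Measurable f) {x y : K} (hx : x ∈ specDomain μ f) (hy : y ∈ specDomain μ f) :
    Tendsto (fun n => specInt μ (apx f hf n) x y) atTop (𝓝 (specInt μ f x y)) := by
  have hi : ∀ w : K, w ∈ specDomain μ f →
      Tendsto (fun n => ∫ z, apx f hf n z ∂(μ w)) atTop (𝓝 (∫ z, f z ∂(μ w))) := by
    intro w hw
    have := mu_finite hE hm w
    have h := tendsto_integral_approxOn_of_measurable (μ := μ w) (s := Set.univ)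
      (specDomain_integrable hE hm hf hw) hf (by simp) (Set.mem_univ (0 : ℂ)) (by simp)
    refine h.congr fun n => ?_
    rw [SimpleFunc.integral_eq_integral _ (SimpleFunc.integrable_of_isFiniteMeasure _)]
    rfl
  have hIy := specDomain_smul hE hm Complex.I hy
  unfold specInt
  exact (((hi _ (specDomain_add hE hm hx hy)).sub (hi _ (specDomain_sub hE hm hx hy))).add
    (((hi _ (specDomain_add hE hm hx hIy)).sub
      (hi _ (specDomain_sub hE hm hx hIy))).const_mul _)).const_mul _

theorem apx_eLpNorm {f : ℂ → ℂ}
    (hf : Measurable f) {x : K} (hx : x ∈ specDomain μ f) :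
    Tendsto (fun n => eLpNorm (⇑(apx f hf n) - f) 2 (μ x)) atTop (𝓝 0) := by
  refine SimpleFunc.tendsto_approxOn_Lp_eLpNorm hf (Set.mem_univ _) (by simp) (by simp) ?_
  simpa using (memLp_of_specDomain hf hx).2

theorem apx_tendsto (hE : IsSpectralMeasure 𝔖 E μ) (hm : MeasurableSet 𝔖) {f : ℂ → ℂ}
    (hf : Measurable f) {x y : K} (hx : x ∈ specDomain μ f)
    (hy : ∀ η ∈ specDomain μ f, ⟪η, y⟫_ℂ = specInt μ f x η) :
    Tendsto (fun n => simpCalc 𝔖 E (apx f hf n) x) atTop (𝓝 y) := by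
  have hlim := apx_eLpNorm hf hx
  have hc : CauchySeq (fun n => simpCalc 𝔖 E (apx f hf n) x) := by
    rw [EMetric.cauchySeq_iff]
    intro ε hε
    have hε2 : 0 < ε / 2 := ENNReal.half_pos hε.ne'
    obtain ⟨N, hN⟩ := (hlim.eventually (gt_mem_nhds hε2)).exists_forall_of_atTop
    refine ⟨N, fun m hm' n hn => ?_⟩
    rw [edist_eq_enorm_sub, ← simpCalc_sub hE hm, simpCalc_enorm' hE hm]
    have e : ⇑(apx f hf m - apx f hf n) = (⇑(apx f hf m) - f) - (⇑(apx f hf n) - f) := by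
      ext z; simp
    rw [e]
    refine lt_of_le_of_lt (eLpNorm_sub_le
      ((apx f hf m).measurable.sub hf).aestronglyMeasurable
      ((apx f hf n).measurable.sub hf).aestronglyMeasurable (by norm_num)) ?_
    rw [← ENNReal.add_halves ε]
    exact ENNReal.add_lt_add (hN m hm') (hN n hn)
  obtain ⟨y', hy'⟩ := cauchySeq_tendsto_of_complete hc
  have : y = y' := by
    refine (specDomain_dense hE hm hf).eq_of_inner_right ℂ fun η hη => ?_
    rw [hy η hη]
    refine tendsto_nhds_unique (apx_specInt hE hm hf hx hη) ?_
    simp_rw [simpCalc_specInt hE hm]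
    exact tendsto_const_nhds.inner hy'
  rw [this]; exact hy'

theorem specDomain_extE (hE : IsSpectralMeasure 𝔖 E μ) (hm : MeasurableSet 𝔖) {f : ℂ → ℂ}
    {A : Set ℂ} (hA : MeasurableSet A) {x : K} (hx : x ∈ specDomain μ f) :
    extE 𝔖 E A x ∈ specDomain μ f := by
  change ∫⁻ z, (‖f z‖₊ : ENNReal) ^ 2 ∂(μ (extE 𝔖 E A x)) < ⊤
  rw [mu_extE hE hm hA]
  exact lt_of_le_of_lt (setLIntegral_le_lintegral _ _) hx

/-- The diagonal measure of `Ψ(f) x` has density `|f|²` with respect to that of `x`. -/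
theorem mu_calc (hE : IsSpectralMeasure 𝔖 E μ) (hm : MeasurableSet 𝔖) {f : ℂ → ℂ}
    (hf : Measurable f) {x y : K} (hx : x ∈ specDomain μ f)
    (hy : ∀ η ∈ specDomain μ f, ⟪η, y⟫_ℂ = specInt μ f x η) {A : Set ℂ} (hA : MeasurableSet A) :
    μ y A = ∫⁻ z in A, ‖f z‖ₑ ^ 2 ∂(μ x) := by
  have h1 := ((extE 𝔖 E A).continuous.tendsto y).comp (apx_tendsto hE hm hf hx hy)
  have h2 := h1.enorm
  have hxA := specDomain_extE hE hm hA hx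
  have h3 := apx_eLpNorm hf hxA
  have h4 : Tendsto (fun n => eLpNorm (⇑(apx f hf n)) 2 (μ (extE 𝔖 E A x))) atTop
      (𝓝 (eLpNorm f 2 (μ (extE 𝔖 E A x)))) := by
    have hfin : eLpNorm f 2 (μ (extE 𝔖 E A x)) ≠ ⊤ := (memLp_of_specDomain hf hxA).2.ne
    refine tendsto_of_tendsto_of_tendsto_of_le_of_le
      (g := fun n => eLpNorm f 2 (μ (extE 𝔖 E A x)) -
        eLpNorm (⇑(apx f hf n) - f) 2 (μ (extE 𝔖 E A x)))
      (h := fun n => eLpNorm f 2 (μ (extE 𝔖 E A x)) +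
        eLpNorm (⇑(apx f hf n) - f) 2 (μ (extE 𝔖 E A x))) ?_ ?_ ?_ ?_
    · simpa using ENNReal.Tendsto.sub (tendsto_const_nhds (x := eLpNorm f 2 (μ (extE 𝔖 E A x))))
        h3 (Or.inl hfin)
    · simpa using (tendsto_const_nhds (x := eLpNorm f 2 (μ (extE 𝔖 E A x)))).add h3
    · intro n
      simp only
      rw [tsub_le_iff_right]
      have e : f = ⇑(apx f hf n) - (⇑(apx f hf n) - f) := by ext z; simp
      conv_lhs => rw [e]
      exact eLpNorm_sub_le (apx f hf n).measurable.aestronglyMeasurable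
        ((apx f hf n).measurable.sub hf).aestronglyMeasurable (by norm_num)
    · intro n
      simp only
      have e : ⇑(apx f hf n) = f + (⇑(apx f hf n) - f) := by ext z; simp
      conv_lhs => rw [e]
      exact eLpNorm_add_le hf.aestronglyMeasurable
        ((apx f hf n).measurable.sub hf).aestronglyMeasurable (by norm_num)
  have h5 : ‖extE 𝔖 E A y‖ₑ = eLpNorm f 2 (μ (extE 𝔖 E A x)) := by
    refine tendsto_nhds_unique h2 (h4.congr fun n => ?_)
    simp only [Function.comp]
    rw [simpCalc_extE hE hm hA, simpCalc_enorm' hE hm]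
  rw [mu_eq_enorm hE hm hA, h5, eLpNorm_two_sq, mu_extE hE hm hA]

end SimpleCalculus
section Spectrum

variable {K : Type*} [NormedAddCommGroup K] [InnerProductSpace ℂ K] [CompleteSpace K]

theorem pmapSpectrum_isClosed (S : K →ₗ.[ℂ] K) : IsClosed (pmapSpectrum S) := by
  rw [← isOpen_compl_iff, Metric.isOpen_iff]
  intro z₀ hz₀
  have hz : HasBoundedResolventAt S z₀ := not_not.mp hz₀
  obtain ⟨R, hR1, hR2⟩ := hz
  refine ⟨1 / (‖R‖ + 1), by positivity, ?_⟩
  intro z hzb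
  have hnorm : ‖(z₀ - z) • R‖ < 1 := by
    rw [Metric.mem_ball, dist_comm, dist_eq_norm, lt_div_iff₀ (by positivity)] at hzb
    rw [norm_smul]
    nlinarith [norm_nonneg (z₀ - z), norm_nonneg R]
  obtain ⟨U, hU⟩ := isUnit_one_sub_of_norm_lt_one hnorm
  let V : K →L[ℂ] K := ((U⁻¹ : (K →L[ℂ] K)ˣ) : K →L[ℂ] K)
  have hUV : ∀ ξ, (U : K →L[ℂ] K) (V ξ) = ξ := fun ξ =>
    congrArg (fun T : K →L[ℂ] K => T ξ) U.mul_inv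
  have hVU : ∀ ξ, V ((U : K →L[ℂ] K) ξ) = ξ := fun ξ =>
    congrArg (fun T : K →L[ℂ] K => T ξ) U.inv_mul
  have hUa : ∀ ξ, (U : K →L[ℂ] K) ξ = ξ - (z₀ - z) • R ξ := fun ξ => by rw [hU]; simp
  refine not_not.mpr (?_ : HasBoundedResolventAt S z)
  refine ⟨R ∘L V, fun ξ => ?_, fun ξ => ?_⟩
  · obtain ⟨h, h'⟩ := hR1 (V ξ)
    refine ⟨h, ?_⟩
    have h2 := hUV ξ
    rw [hUa, sub_smul] at h2
    change z • R (V ξ) - S ⟨R (V ξ), h⟩ = ξ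
    have h3 : S ⟨R (V ξ), h⟩ = z₀ • R (V ξ) - V ξ := by
      rw [eq_sub_iff_add_eq, add_comm, ← eq_sub_iff_add_eq]; exact h'.symm
    rw [h3]
    conv_rhs => rw [← h2]
    abel
  · have h1 := hR2 ξ
    have h2 := hUa (z₀ • (ξ : K) - S ξ)
    rw [h1] at h2
    have h3 : z • (ξ : K) - S ξ = (U : K →L[ℂ] K) (z₀ • (ξ : K) - S ξ) := by
      rw [h2, sub_smul]; abel
    rw [ContinuousLinearMap.comp_apply, h3, hVU, h1]

variable {𝔖 : Set ℂ} {E : Set ℂ → K →L[ℂ] K} {μ : K → Measure ℂ}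

theorem specDomain_iff_memLp {f : ℂ → ℂ} (hf : Measurable f) {x : K} :
    x ∈ specDomain μ f ↔ MemLp f 2 (μ x) := by
  refine ⟨memLp_of_specDomain hf, fun h => ?_⟩
  have h2 := h.2
  rw [eLpNorm_lt_top_iff_lintegral_rpow_enorm_lt_top (by simp) (by simp)] at h2
  simp only [ENNReal.toReal_ofNat, ENNReal.rpow_ofNat] at h2
  exact h2

theorem specDomain_shift (hE : IsSpectralMeasure 𝔖 E μ) (hm : MeasurableSet 𝔖) (w : ℂ) {x : K} :
    x ∈ specDomain μ (fun z => z - w) ↔ x ∈ specDomain μ (fun z => z) := by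
  have := mu_finite hE hm x
  rw [specDomain_iff_memLp (by fun_prop), specDomain_iff_memLp (by fun_prop)]
  constructor
  · intro h
    have := h.add (memLp_const w)
    refine this.congr_norm (by fun_prop) (Filter.Eventually.of_forall fun z => by simp)
  · intro h
    exact h.sub (memLp_const w)

theorem specInt_shift (hE : IsSpectralMeasure 𝔖 E μ) (hm : MeasurableSet 𝔖) (w : ℂ) {x y : K}
    (hx : x ∈ specDomain μ (fun z => z)) (hy : y ∈ specDomain μ (fun z => z)) :
    specInt μ (fun z => z - w) x y = specInt μ (fun z => z) x y - w * ⟪y, x⟫_ℂ := by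
  have hi : ∀ v : K, v ∈ specDomain μ (fun z => z) →
      ∫ z, (z - w) ∂(μ v) = ∫ z, z ∂(μ v) - w * ⟪v, v⟫_ℂ := by
    intro v hv
    have := mu_finite hE hm v
    rw [integral_sub (specDomain_integrable hE hm measurable_id' hv) (integrable_const w),
      integral_const, Complex.real_smul, mu_real hE hm MeasurableSet.univ, extE_univ hE, mul_comm]
  have hIy := specDomain_smul hE hm Complex.I hy
  unfold specInt
  rw [hi _ (specDomain_add hE hm hx hy), hi _ (specDomain_sub hE hm hx hy),
    hi _ (specDomain_add hE hm hx hIy), hi _ (specDomain_sub hE hm hx hIy)]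
  simp only [inner_add_left, inner_add_right, inner_sub_left,
    inner_sub_right, inner_smul_left, inner_smul_right, Complex.conj_I]
  ring_nf
  simp only [Complex.I_sq]
  ring

theorem mu_step (hE : IsSpectralMeasure 𝔖 E μ) (hm : MeasurableSet 𝔖) (S : K →ₗ.[ℂ] K)
    (hdom : ∀ ξ : K, ξ ∈ S.domain ↔ ξ ∈ specDomain μ (fun z => z))
    (hSE : ∀ ξ η : S.domain, ⟪(η : K), S ξ⟫_ℂ = specInt μ (fun z => z) ξ η)
    (w : ℂ) (x : S.domain) {A : Set ℂ} (hA : MeasurableSet A) :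
    μ (S x - w • (x : K)) A = ∫⁻ z in A, ‖z - w‖ₑ ^ 2 ∂(μ x) := by
  have hx := (hdom x).mp x.2
  refine mu_calc hE hm (f := fun z => z - w) (by fun_prop) ((specDomain_shift hE hm w).mpr hx)
    (fun η hη => ?_) hA
  have hη' := (specDomain_shift hE hm w).mp hη
  rw [specInt_shift hE hm w hx hη', inner_sub_right, inner_smul_right,
    hSE x ⟨η, (hdom η).mpr hη'⟩]

/-- A vector all of whose iterates under `S - w` grow at most like `r ^ n` lies in the range
of the spectral projection of the closed disc of radius `r` about `w`. -/
theorem fix_of_growth (hE : IsSpectralMeasure 𝔖 E μ) (hm : MeasurableSet 𝔖) (S : K →ₗ.[ℂ] K)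
    (hdom : ∀ ξ : K, ξ ∈ S.domain ↔ ξ ∈ specDomain μ (fun z => z))
    (hSE : ∀ ξ η : S.domain, ⟪(η : K), S ξ⟫_ℂ = specInt μ (fun z => z) ξ η)
    (w : ℂ) {r : ℝ} (hr : 0 < r) (y : ℕ → S.domain)
    (hy : ∀ n, (y (n + 1) : K) = S (y n) - w • (y n : K))
    (hg : ∀ n, ‖(y (n + 1) : K)‖ ≤ r * ‖(y n : K)‖) :
    extE 𝔖 E (Metric.closedBall w r) (y 0 : K) = y 0 := by
  rw [extE_fix_iff hE hm measurableSet_closedBall]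
  have key : ∀ r' : ℝ, r < r' → μ (y 0) {z | r' ≤ ‖z - w‖} = 0 := by
    intro r' hr'
    have hA : MeasurableSet {z : ℂ | r' ≤ ‖z - w‖} :=
      measurableSet_le measurable_const (by fun_prop)
    have := fun v : K => mu_finite hE hm v
    have h1 : ∀ n, r' ^ 2 * (μ (y n)).real {z | r' ≤ ‖z - w‖} ≤
        (μ (y (n + 1))).real {z | r' ≤ ‖z - w‖} := by
      intro n
      have h := mu_step hE hm S hdom hSE w (y n) hA
      rw [← hy n] at h
      have h2 : ENNReal.ofReal (r' ^ 2) * μ (y n) {z | r' ≤ ‖z - w‖} ≤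
          μ (y (n + 1)) {z | r' ≤ ‖z - w‖} := by
        rw [h, ← setLIntegral_const]
        refine setLIntegral_mono' hA fun z hz => ?_
        rw [← ofReal_norm, ← ENNReal.ofReal_pow (norm_nonneg _)]
        apply ENNReal.ofReal_le_ofReal
        have hz' : r' ≤ ‖z - w‖ := hz
        have : 0 < r' := hr.trans hr'
        gcongr
      have h3 := ENNReal.toReal_mono (measure_ne_top _ _) h2
      rwa [ENNReal.toReal_mul, ENNReal.toReal_ofReal (by positivity)] at h3
    have h2 : ∀ n, (r' ^ 2) ^ n * (μ (y 0)).real {z | r' ≤ ‖z - w‖} ≤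
        (μ (y n)).real {z | r' ≤ ‖z - w‖} := by
      intro n
      induction n with
      | zero => simp
      | succ n ih =>
        refine le_trans ?_ (h1 n)
        rw [pow_succ', mul_assoc]
        gcongr
    have h3 : ∀ n, ‖(y n : K)‖ ≤ r ^ n * ‖(y 0 : K)‖ := by
      intro n
      induction n with
      | zero => simp
      | succ n ih =>
        refine (hg n).trans ?_
        rw [pow_succ', mul_assoc]
        gcongr
    have h4 : ∀ n, (μ (y n)).real {z | r' ≤ ‖z - w‖} ≤ (r ^ 2) ^ n * ‖(y 0 : K)‖ ^ 2 := by
      intro n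
      refine (measureReal_mono (Set.subset_univ _)).trans ?_
      rw [Measure.real, mu_univ hE hm, ENNReal.toReal_pow, toReal_enorm]
      refine (pow_le_pow_left₀ (norm_nonneg _) (h3 n) 2).trans_eq ?_
      ring
    have hpos : 0 < r' := hr.trans hr'
    have h5 : ∀ n, (μ (y 0)).real {z | r' ≤ ‖z - w‖} ≤ (r ^ 2 / r' ^ 2) ^ n * ‖(y 0 : K)‖ ^ 2 := by
      intro n
      have := (h2 n).trans (h4 n)
      rw [div_pow, div_mul_eq_mul_div, le_div_iff₀ (by positivity), mul_comm]
      exact this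
    have hlt : r ^ 2 / r' ^ 2 < 1 := by
      rw [div_lt_one (by positivity)]
      gcongr
    have h6 := (tendsto_pow_atTop_nhds_zero_of_lt_one (by positivity) hlt).mul_const
      (‖(y 0 : K)‖ ^ 2)
    rw [zero_mul] at h6
    have h7 : (μ (y 0)).real {z | r' ≤ ‖z - w‖} ≤ 0 := ge_of_tendsto' h6 h5
    have h8 := le_antisymm h7 measureReal_nonneg
    rwa [measureReal_eq_zero_iff] at h8
  have hsub : (Metric.closedBall w r)ᶜ ⊆ ⋃ n : ℕ, {z | r + 1 / ((n : ℝ) + 1) ≤ ‖z - w‖} := by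
    intro z hz
    have hz' : 0 < ‖z - w‖ - r := by
      rw [Set.mem_compl_iff, Metric.mem_closedBall, dist_eq_norm, not_le] at hz
      linarith
    obtain ⟨n, hn⟩ := exists_nat_one_div_lt hz'
    refine Set.mem_iUnion.mpr ⟨n, ?_⟩
    change r + 1 / ((n : ℝ) + 1) ≤ ‖z - w‖
    linarith
  refine measure_mono_null hsub (measure_iUnion_null fun n => key _ ?_)
  have : (0 : ℝ) < 1 / ((n : ℝ) + 1) := by positivity
  linarith

theorem fix_step (hE : IsSpectralMeasure 𝔖 E μ) (hm : MeasurableSet 𝔖) (S : K →ₗ.[ℂ] K)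
    (hdom : ∀ ξ : K, ξ ∈ S.domain ↔ ξ ∈ specDomain μ (fun z => z))
    (hSE : ∀ ξ η : S.domain, ⟪(η : K), S ξ⟫_ℂ = specInt μ (fun z => z) ξ η)
    (w : ℂ) {r : ℝ} (hr : 0 < r) (x : S.domain)
    (hx : extE 𝔖 E (Metric.closedBall w r) (x : K) = x) :
    extE 𝔖 E (Metric.closedBall w r) (S x - w • (x : K)) = S x - w • (x : K) ∧
      ‖S x - w • (x : K)‖ ≤ r * ‖(x : K)‖ := by
  rw [extE_fix_iff hE hm measurableSet_closedBall] at *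
  constructor
  · rw [mu_step hE hm S hdom hSE w x measurableSet_closedBall.compl]
    exact setLIntegral_measure_zero _ _ hx
  · have h := mu_step hE hm S hdom hSE w x MeasurableSet.univ
    rw [Measure.restrict_univ, mu_univ hE hm] at h
    have h2 : ∫⁻ z, ‖z - w‖ₑ ^ 2 ∂(μ x) ≤ ∫⁻ z, ENNReal.ofReal (r ^ 2) ∂(μ x) := by
      refine lintegral_mono_ae ?_
      have hae : ∀ᵐ z ∂(μ (x : K)), z ∈ Metric.closedBall w r := hx
      filter_upwards [hae] with z hz
      rw [Metric.mem_closedBall, dist_eq_norm] at hz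
      rw [← ofReal_norm, ← ENNReal.ofReal_pow (norm_nonneg _)]
      apply ENNReal.ofReal_le_ofReal
      gcongr
    rw [← h, lintegral_const, mu_univ hE hm] at h2
    have h3 := ENNReal.toReal_mono
      (ENNReal.mul_ne_top ENNReal.ofReal_ne_top (ENNReal.pow_ne_top (by simp))) h2
    rw [ENNReal.toReal_mul, ENNReal.toReal_ofReal (by positivity), ENNReal.toReal_pow,
      ENNReal.toReal_pow, toReal_enorm, toReal_enorm, ← mul_pow] at h3
    exact le_of_sq_le_sq h3 (by positivity)

theorem fix_mem_domain (hE : IsSpectralMeasure 𝔖 E μ) (hm : MeasurableSet 𝔖) (S : K →ₗ.[ℂ] K)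
    (hdom : ∀ ξ : K, ξ ∈ S.domain ↔ ξ ∈ specDomain μ (fun z => z))
    (w : ℂ) {r : ℝ} (x : K)
    (hx : extE 𝔖 E (Metric.closedBall w r) x = x) : x ∈ S.domain := by
  rw [hdom, ← specDomain_shift hE hm w, specDomain_iff_memLp (by fun_prop)]
  rw [extE_fix_iff hE hm measurableSet_closedBall] at hx
  have := mu_finite hE hm x
  refine MemLp.of_bound (by fun_prop) r ?_
  have hae : ∀ᵐ z ∂(μ x), z ∈ Metric.closedBall w r := hx
  filter_upwards [hae] with z hz
  rwa [Metric.mem_closedBall, dist_eq_norm] at hz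

end Spectrum
section Conj

variable {K : Type*} [NormedAddCommGroup K] [InnerProductSpace ℂ K] [CompleteSpace K]

theorem IsConjugation.norm_map {C : K → K} (hC : IsConjugation C) (x : K) : ‖C x‖ = ‖x‖ := by
  have h := hC.inner_map x x
  rw [inner_self_eq_norm_sq_to_K, inner_self_eq_norm_sq_to_K] at h
  have h2 : ((‖C x‖ ^ 2 : ℝ) : ℂ) = ((‖x‖ ^ 2 : ℝ) : ℂ) := by
    rw [← Complex.conj_ofReal (‖x‖ ^ 2)]; push_cast; exact h
  rw [Complex.ofReal_inj] at h2
  exact (pow_left_inj₀ (norm_nonneg _) (norm_nonneg _) two_ne_zero).mp h2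

theorem IsConjugation.map_sub' {C : K → K} (hC : IsConjugation C) (x y : K) :
    C (x - y) = C x - C y := by
  have h : x - y = x + (-1 : ℂ) • y := by simp [sub_eq_add_neg]
  rw [h, hC.map_add, hC.map_smul]
  simp [sub_eq_add_neg]

variable {𝔖 : Set ℂ} {E : Set ℂ → K →L[ℂ] K} {μ : K → Measure ℂ}

theorem fix_conj {C : K → K} (hC : IsConjugation C)
    (hE : IsSpectralMeasure 𝔖 E μ) (hm : MeasurableSet 𝔖) (S : K →ₗ.[ℂ] K)
    (hCdom : ∀ ξ : K, ξ ∈ S.domain ↔ C ξ ∈ S.domain)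
    (hCS : ∀ (ξ : K) (h : ξ ∈ S.domain) (h' : C ξ ∈ S.domain),
      C (S ⟨C ξ, h'⟩) = S ⟨ξ, h⟩)
    (hdom : ∀ ξ : K, ξ ∈ S.domain ↔ ξ ∈ specDomain μ (fun z => z))
    (hSE : ∀ ξ η : S.domain, ⟪(η : K), S ξ⟫_ℂ = specInt μ (fun z => z) ξ η)
    (w : ℂ) {r : ℝ} (hr : 0 < r) (x : K)
    (hx : extE 𝔖 E (Metric.closedBall w r) x = x) :
    extE 𝔖 E (Metric.closedBall (conj w) r) (C x) = C x := by
  let M := {v : S.domain // extE 𝔖 E (Metric.closedBall w r) (v : K) = v}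
  let T : M → M := fun v =>
    ⟨⟨S v.1 - w • (v.1 : K), fix_mem_domain hE hm S hdom w _
      (fix_step hE hm S hdom hSE w hr v.1 v.2).1⟩,
      (fix_step hE hm S hdom hSE w hr v.1 v.2).1⟩
  let x0 : M := ⟨⟨x, fix_mem_domain hE hm S hdom w x hx⟩, hx⟩
  have hT : ∀ v : M, ((T v).1 : K) = S v.1 - w • (v.1 : K) := fun v => rfl
  have hTn : ∀ v : M, ‖((T v).1 : K)‖ ≤ r * ‖(v.1 : K)‖ := fun v =>
    (fix_step hE hm S hdom hSE w hr v.1 v.2).2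
  let y : ℕ → S.domain := fun n => ⟨C ((T^[n] x0).1 : K), (hCdom _).mp (T^[n] x0).1.2⟩
  refine fix_of_growth hE hm S hdom hSE (conj w) hr y (fun n => ?_) (fun n => ?_)
  · simp only [y, Function.iterate_succ_apply', hT]
    rw [hC.map_sub', hC.map_smul]
    congr 1
    generalize T^[n] x0 = v
    have h := hCS (v.1 : K) v.1.2 ((hCdom _).mp v.1.2)
    rw [← hC.invol (S ⟨C (v.1 : K), _⟩), h]
  · simp only [y, Function.iterate_succ_apply']
    rw [hC.norm_map, hC.norm_map]
    exact hTn _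

theorem extE_ball_conj {C : K → K} (hC : IsConjugation C)
    (hE : IsSpectralMeasure 𝔖 E μ) (hm : MeasurableSet 𝔖) (S : K →ₗ.[ℂ] K)
    (hCdom : ∀ ξ : K, ξ ∈ S.domain ↔ C ξ ∈ S.domain)
    (hCS : ∀ (ξ : K) (h : ξ ∈ S.domain) (h' : C ξ ∈ S.domain),
      C (S ⟨C ξ, h'⟩) = S ⟨ξ, h⟩)
    (hdom : ∀ ξ : K, ξ ∈ S.domain ↔ ξ ∈ specDomain μ (fun z => z))
    (hSE : ∀ ξ η : S.domain, ⟪(η : K), S ξ⟫_ℂ = specInt μ (fun z => z) ξ η)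
    (w : ℂ) {r : ℝ} (hr : 0 < r) (x : K) :
    extE 𝔖 E (Metric.closedBall (conj w) r) (C x) =
      C (extE 𝔖 E (Metric.closedBall w r) x) := by
  have hidem : ∀ (v : ℂ) (a : K), extE 𝔖 E (Metric.closedBall v r)
      (extE 𝔖 E (Metric.closedBall v r) a) = extE 𝔖 E (Metric.closedBall v r) a := fun v a => by
    rw [extE_inter hE hm measurableSet_closedBall measurableSet_closedBall, Set.inter_self]
  have h1 := fun a => fix_conj hC hE hm S hCdom hCS hdom hSE w hr _ (hidem w a)
  have h2 := fun a => fix_conj hC hE hm S hCdom hCS hdom hSE (conj w) hr _ (hidem (conj w) a)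
  rw [Complex.conj_conj] at h2
  refine ext_inner_right ℂ fun η => ?_
  have hsa := fun (v : ℂ) => extE_sa hE hm (measurableSet_closedBall (x := v) (ε := r))
  rw [← hsa, ← hC.invol (extE 𝔖 E (Metric.closedBall (conj w) r) η), hC.inner_map, ← h2 η, hsa,
    ← hC.inner_map, hC.invol, hsa, h1]

/-- Closed balls of positive radius generate the Borel sigma-algebra of the plane. -/
theorem generate_of_closedBall (G : Set (Set ℂ)) (hG : ∀ s ∈ G, MeasurableSet s)
    (hb : ∀ (w : ℂ) (r : ℝ), 0 < r → Metric.closedBall w r ∈ G) :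
    (inferInstance : MeasurableSpace ℂ) = MeasurableSpace.generateFrom G := by
  apply le_antisymm
  · have hbor : (inferInstance : MeasurableSpace ℂ) = borel ℂ := BorelSpace.measurable_eq
    rw [hbor]
    refine MeasurableSpace.generateFrom_le fun U hU => ?_
    have hUo : IsOpen U := hU
    have e : U = ⋃ (n : ℕ), ⋃ (m : ℕ), ⋃ (_ : Metric.closedBall
        (TopologicalSpace.denseSeq ℂ n) (1 / ((m : ℝ) + 1)) ⊆ U),
        Metric.closedBall (TopologicalSpace.denseSeq ℂ n) (1 / ((m : ℝ) + 1)) := by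
      ext z
      simp only [Set.mem_iUnion, exists_prop]
      constructor
      · intro hz
        obtain ⟨ε, hε, hεU⟩ := Metric.isOpen_iff.mp hUo z hz
        obtain ⟨m, hm⟩ := exists_nat_one_div_lt (half_pos hε)
        obtain ⟨n, hn⟩ := (TopologicalSpace.denseRange_denseSeq ℂ).exists_dist_lt z
          (Nat.one_div_pos_of_nat (α := ℝ) (n := m))
        refine ⟨n, m, fun v hv => hεU ?_, Metric.mem_closedBall.mpr hn.le⟩
        rw [Metric.mem_closedBall] at hv
        rw [Metric.mem_ball]
        have := dist_triangle_right v z (TopologicalSpace.denseSeq ℂ n)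
        linarith
      · rintro ⟨n, m, h, hz⟩
        exact h hz
    rw [e]
    refine MeasurableSet.iUnion fun n => MeasurableSet.iUnion fun m => MeasurableSet.iUnion fun _ =>
      MeasurableSpace.measurableSet_generateFrom (hb _ _ (by positivity))
  · exact MeasurableSpace.generateFrom_le hG

theorem mu_conj {C : K → K} (hC : IsConjugation C)
    (hE : IsSpectralMeasure 𝔖 E μ) (hm : MeasurableSet 𝔖) (S : K →ₗ.[ℂ] K)
    (hCdom : ∀ ξ : K, ξ ∈ S.domain ↔ C ξ ∈ S.domain)
    (hCS : ∀ (ξ : K) (h : ξ ∈ S.domain) (h' : C ξ ∈ S.domain),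
      C (S ⟨C ξ, h'⟩) = S ⟨ξ, h⟩)
    (hdom : ∀ ξ : K, ξ ∈ S.domain ↔ ξ ∈ specDomain μ (fun z => z))
    (hSE : ∀ ξ η : S.domain, ⟪(η : K), S ξ⟫_ℂ = specInt μ (fun z => z) ξ η) (x : K) :
    μ (C x) = (μ x).map (fun z => conj z) := by
  have hcm : Measurable (fun z : ℂ => conj z) := Complex.continuous_conj.measurable
  let G : Set (Set ℂ) := {A | MeasurableSet A ∧
    ∀ x, extE 𝔖 E A (C x) = C (extE 𝔖 E ((fun z : ℂ => conj z) ⁻¹' A) x)}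
  have hpi : IsPiSystem G := by
    rintro A ⟨hA, hA'⟩ B ⟨hB, hB'⟩ -
    refine ⟨hA.inter hB, fun x => ?_⟩
    rw [← extE_inter hE hm hA hB, hB', hA', Set.preimage_inter, extE_inter hE hm (hcm hA) (hcm hB)]
  have hgen := generate_of_closedBall G (fun s hs => hs.1) (fun w r hr => by
    refine ⟨measurableSet_closedBall, fun x => ?_⟩
    have h := extE_ball_conj hC hE hm S hCdom hCS hdom hSE (conj w) hr x
    rw [Complex.conj_conj] at h
    rw [h]
    congr 3
    ext z
    simp only [Metric.mem_closedBall, Set.mem_preimage]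
    rw [← Complex.dist_conj_conj z, Complex.conj_conj])
  have := fun v => mu_finite hE hm v
  refine ext_of_generate_finite G hgen hpi ?_ ?_
  · rintro A ⟨hA, hA'⟩
    rw [Measure.map_apply hcm hA, mu_eq hE hm hA, mu_eq hE hm (hcm hA), hA', hC.norm_map]
  · rw [Measure.map_apply hcm MeasurableSet.univ, Set.preimage_univ, mu_univ hE hm, mu_univ hE hm,
      ← ofReal_norm, ← ofReal_norm, hC.norm_map]

end Conj

/-- Let `C` be a conjugation on `K` and `S` a closed densely defined normal
operator in `K` commuting with `C`; let `E` (with diagonal scalar measures `μ`) be the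
spectral measure of `S` on `𝔖 = σ(S)`.  For every Borel `E`-stem function `f`, with
`D_f = {ξ : ∫|f|² dμ_{ξ,ξ} < ∞}` and `Ψ(f)` the associated operator:
`C(D_f) = D_f`; `Ψ(f)` commutes with `C` on `D_f`; hence `Ψ(f)` maps `D_f ∩ H` into `H`;
and `‖Ψ(f)x‖² = ∫_𝔖 |f|² dμ_{x,x}` for `x ∈ D_f ∩ H`. -/
theorem unbounded_stem_calculus_conj_invariant
    {K : Type*} [NormedAddCommGroup K] [InnerProductSpace ℂ K] [CompleteSpace K]
    {C : K → K} (hC : IsConjugation C) (S : K →ₗ.[ℂ] K) (hS : IsNormalPMap S)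
    (hCdom : ∀ ξ : K, ξ ∈ S.domain ↔ C ξ ∈ S.domain)
    (hCS : ∀ (ξ : K) (h : ξ ∈ S.domain) (h' : C ξ ∈ S.domain),
      C (S ⟨C ξ, h'⟩) = S ⟨ξ, h⟩)
    (E : Set ℂ → K →L[ℂ] K) (μ : K → Measure ℂ)
    (hE : IsSpectralMeasure (pmapSpectrum S) E μ)
    (hdom : ∀ ξ : K, ξ ∈ S.domain ↔ ξ ∈ specDomain μ (fun z => z))
    (hSE : ∀ ξ η : S.domain, ⟪(η : K), S ξ⟫_ℂ = specInt μ (fun z => z) ξ η)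
    (f : ℂ → ℂ) (hfmeas : Measurable f)
    (hfstem : ∃ N : Set ℂ, MeasurableSet N ∧ N ⊆ pmapSpectrum S ∧ E N = 0 ∧
      ∀ z ∈ pmapSpectrum S \ N, f (conj z) = conj (f z))
    (Ψf : K → K)
    (hΨf : ∀ ξ ∈ specDomain μ f, ∀ η ∈ specDomain μ f, ⟪η, Ψf ξ⟫_ℂ = specInt μ f ξ η) :
    (C '' specDomain μ f = specDomain μ f) ∧
    (∀ ξ ∈ specDomain μ f, Ψf (C ξ) = C (Ψf ξ)) ∧
    (∀ ξ ∈ specDomain μ f, C ξ = ξ → C (Ψf ξ) = Ψf ξ) ∧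
    (∀ x ∈ specDomain μ f, C x = x → ‖Ψf x‖ ^ 2 = ∫ z, ‖f z‖ ^ 2 ∂(μ x)) := by
  have hm : MeasurableSet (pmapSpectrum S) := (pmapSpectrum_isClosed S).measurableSet
  have hcm : Measurable (fun z : ℂ => conj z) := Complex.continuous_conj.measurable
  have hmu := mu_conj hC hE hm S hCdom hCS hdom hSE
  obtain ⟨N, hNm, hNs, hN0, hNf⟩ := hfstem
  have hae : ∀ x : K, ∀ᵐ z ∂(μ x), f (conj z) = conj (f z) := by
    intro x
    have h1 : μ x N = 0 := by
      rw [hE.measure_eq x N hNm hNs, hN0]; simp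
    have h2 : ∀ᵐ z ∂(μ x), z ∉ N := measure_eq_zero_iff_ae_notMem.mp h1
    have h3 : ∀ᵐ z ∂(μ x), z ∉ (pmapSpectrum S)ᶜ :=
      measure_eq_zero_iff_ae_notMem.mp (hE.measure_compl x)
    filter_upwards [h2, h3] with z hz1 hz2
    exact hNf z ⟨not_not.mp hz2, hz1⟩
  have hCD : ∀ x ∈ specDomain μ f, C x ∈ specDomain μ f := by
    intro x hx
    change ∫⁻ z, (‖f z‖₊ : ENNReal) ^ 2 ∂(μ (C x)) < ⊤
    rw [hmu, lintegral_map (by fun_prop) hcm]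
    refine lt_of_le_of_lt (le_of_eq (lintegral_congr_ae ?_)) hx
    filter_upwards [hae x] with z hz
    simp only [hz, RCLike.nnnorm_conj]
  have hint : ∀ x : K, ∫ z, f z ∂(μ (C x)) = conj (∫ z, f z ∂(μ x)) := by
    intro x
    rw [hmu, integral_map hcm.aemeasurable hfmeas.aestronglyMeasurable, ← integral_conj]
    exact integral_congr_ae (hae x)
  have hcomm : ∀ ξ ∈ specDomain μ f, Ψf (C ξ) = C (Ψf ξ) := by
    intro ξ hξ
    refine (specDomain_dense hE hm hfmeas).eq_of_inner_right ℂ fun η hη => ?_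
    have h1 : ⟪η, C (Ψf ξ)⟫_ℂ = conj ⟪C η, Ψf ξ⟫_ℂ := by
      rw [← hC.inner_map, hC.invol]
    rw [h1, hΨf _ (hCD ξ hξ) η hη, hΨf ξ hξ _ (hCD η hη)]
    have e1 : C ξ + η = C (ξ + C η) := by rw [hC.map_add, hC.invol]
    have e2 : C ξ - η = C (ξ - C η) := by rw [hC.map_sub', hC.invol]
    have e3 : C ξ + Complex.I • η = C (ξ - Complex.I • C η) := by
      rw [hC.map_sub', hC.map_smul, hC.invol]; simp
    have e4 : C ξ - Complex.I • η = C (ξ + Complex.I • C η) := by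
      rw [hC.map_add, hC.map_smul, hC.invol]; simp [sub_eq_add_neg]
    unfold specInt
    rw [e1, e2, e3, e4, hint, hint, hint, hint]
    simp only [map_mul, map_add, map_sub, map_inv₀, Complex.conj_I, Complex.conj_ofNat]
    ring
  refine ⟨?_, hcomm, ?_, ?_⟩
  · ext x
    constructor
    · rintro ⟨y, hy, rfl⟩
      exact hCD y hy
    · intro hx
      exact ⟨C x, hCD x hx, hC.invol x⟩
  · intro ξ hξ hfix
    rw [← hcomm ξ hξ, hfix]
  · intro x hx _
    have h := mu_calc hE hm hfmeas hx (fun η hη => hΨf x hx η hη) MeasurableSet.univ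
    rw [Measure.restrict_univ, mu_univ hE hm] at h
    rw [integral_eq_lintegral_of_nonneg_ae (Filter.Eventually.of_forall fun z => by positivity)
      (by fun_prop)]
    have h2 := congrArg ENNReal.toReal h
    rw [ENNReal.toReal_pow, toReal_enorm] at h2
    rw [h2]
    congr 1
    refine lintegral_congr fun z => ?_
    rw [ENNReal.ofReal_pow (norm_nonneg _), ofReal_norm]
end
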